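/- arXiv:1509.03871 — 3 statements merged into one kernel-verified Lean document; each statement's English description precedes it below -/
import Mathlib

section
/- For every δ > 0 there is a constant C_δ such that for every even positive integer f and every positive integer w, the number of gluing stories g ∈ GS(f) for which the quotient complex X(g) is simplicially isomorphic to a connected triangulated closed surface with w vertices is at most C_δ^f · f^{3f} · w^{−(1−δ)w}. -/
/-- A connected triangulated closed surface on the vertex set `Fin w`, given by its
(nonempty) set `F` of 3-element faces: every edge lies in exactly two faces, the link
of every vertex is connected, any two faces are joined by a chain of faces in which
consecutive faces share an edge, and every vertex lies in some face. -/
def IsClosedSurface {w : ℕ} (F : Finset (Finset (Fin w))) : Prop :=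
  F.Nonempty ∧
  (∀ t ∈ F, t.card = 3) ∧
  (∀ e : Finset (Fin w), e.card = 2 → (∃ t ∈ F, e ⊆ t) →
    (F.filter (fun t => e ⊆ t)).card = 2) ∧
  (∀ v : Fin w, ∃ t ∈ F, v ∈ t) ∧
  (∀ v a b : Fin w,
    (∃ t ∈ F, v ∈ t ∧ a ∈ t ∧ a ≠ v) → (∃ t ∈ F, v ∈ t ∧ b ∈ t ∧ b ≠ v) →
    Relation.ReflTransGen (fun x y => ({v, x, y} : Finset (Fin w)) ∈ F) a b) ∧
  (∀ t ∈ F, ∀ t' ∈ F,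
    Relation.ReflTransGen (fun s s' => s ∈ F ∧ s' ∈ F ∧ (s ∩ s').card = 2) t t')

/-- A gluing story on `f` labelled triangles. Each triangle `j : Fin f` has three edge
slots indexed by `Fin 3` (slot `(j,a)` is the edge opposite corner `(j,a)`, with
endpoints the corners `(j,a+1)` and `(j,a+2)`). A gluing story is a sequence of `3f/2`
gluings, each consisting of an ordered pair of distinct edge slots together with a
`Bool` selecting one of the two bijections between the endpoint pairs, such that every
one of the `3f` slots occurs in exactly one gluing. -/
def GluingStory (f : ℕ) :=
  {g : Fin (3 * f / 2) → (Fin f × Fin 3) × (Fin f × Fin 3) × Bool //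
    (∀ k, (g k).1 ≠ (g k).2.1) ∧
    ∀ s : Fin f × Fin 3, ∃! k, s = (g k).1 ∨ s = (g k).2.1}

/-- The identifications of corners prescribed by the gluings of a gluing story: the
slot `(j,a)` has endpoint corners `(j,a+1)` and `(j,a+2)`, and each gluing identifies
the endpoints of its two slots according to the chosen bijection (the `Bool`). The
equivalence relation generated by this relation defines the vertices of the quotient
complex. -/
def cornerRel {f : ℕ} (g : GluingStory f) : Fin f × Fin 3 → Fin f × Fin 3 → Prop :=
  fun x y => ∃ k : Fin (3 * f / 2),
    (x = ((g.1 k).1.1, (g.1 k).1.2 + 1) ∧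
      y = ((g.1 k).2.1.1, (g.1 k).2.1.2 + (if (g.1 k).2.2 then 2 else 1))) ∨
    (x = ((g.1 k).1.1, (g.1 k).1.2 + 2) ∧
      y = ((g.1 k).2.1.1, (g.1 k).2.1.2 + (if (g.1 k).2.2 then 1 else 2)))

/-- `X(g)` is simplicially isomorphic to the complex `F` on `Fin w`: there is a
bijection `φ` from the `cornerRel`-classes to `Fin w` under which, for each triangle
`j`, the classes of its three corners are distinct and form a face of `F`, and
`j ↦ face` is a bijection between the `f` triangles and the faces of `F`. -/
def IsoToSurface {f w : ℕ} (g : GluingStory f) (F : Finset (Finset (Fin w))) : Prop :=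
  ∃ φ : Quot (cornerRel g) → Fin w, Function.Bijective φ ∧
    (∀ j : Fin f,
      ({φ (Quot.mk _ (j, 0)), φ (Quot.mk _ (j, 1)), φ (Quot.mk _ (j, 2))} :
        Finset (Fin w)).card = 3 ∧
      ({φ (Quot.mk _ (j, 0)), φ (Quot.mk _ (j, 1)), φ (Quot.mk _ (j, 2))} :
        Finset (Fin w)) ∈ F) ∧
    Function.Injective (fun j : Fin f =>
      ({φ (Quot.mk _ (j, 0)), φ (Quot.mk _ (j, 1)), φ (Quot.mk _ (j, 2))} :
        Finset (Fin w))) ∧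
    Finset.image (fun j : Fin f =>
      ({φ (Quot.mk _ (j, 0)), φ (Quot.mk _ (j, 1)), φ (Quot.mk _ (j, 2))} :
        Finset (Fin w))) Finset.univ = F

/-!
Direct a spanning tree of the 1-skeleton of `X(g)` towards a root. Once the positions of the `w - 1`
gluings along the tree are given, together with the slots of the triangles that lie on tree edges,
the second slots and bijections of these gluings carry no information. Indeed, at a vertex all of
whose children have been treated, only the gluing along the edge to its parent is unknown, and
walking around the vertex from one of the two slots on this edge leads to the other.

The positions and slots cost only `exp(O(f))`, whereas the `w - 1` forgotten entries save a factor
`(6f)^(w-1)`, which `w ≤ 3f/2 + 1` turns into `w^w` up to `exp(O(f))`.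
-/

theorem even_card_of_involution {α : Type*} (s : Finset α) (σ : α → α)
    (mem : ∀ x ∈ s, σ x ∈ s) (invol : ∀ x ∈ s, σ (σ x) = x) (ne : ∀ x ∈ s, σ x ≠ x) :
    Even s.card := by
  have hsum : ∑ _x ∈ s, (1 : ZMod 2) = 0 :=
    Finset.sum_involution (fun x _ => σ x) (fun _ _ => by decide) (fun x hx _ => ne x hx) mem invol
  rw [← ZMod.natCast_eq_zero_iff_even]
  simpa using hsum

/-- The orbits of `a` and `b` are alternating cycles, and a cycle stays connected when one edge,
here the one joining `x` to `b x`, is removed. -/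
theorem reflTransGen_avoiding_edge {α : Type*} [Finite α] {a b : α → α}
    (ha : Function.Involutive a) (ha' : ∀ y, a y ≠ y)
    (hb : Function.Involutive b) (hb' : ∀ y, b y ≠ y) (x : α) :
    Relation.ReflTransGen (fun y z => z = a y ∨ (y ≠ x ∧ y ≠ b x ∧ z = b y)) x (b x) := by
  classical
  set R : α → α → Prop := fun y z => z = a y ∨ (y ≠ x ∧ y ≠ b x ∧ z = b y)
  by_contra hbx
  let A : Finset α := (Set.toFinite {y | Relation.ReflTransGen R x y}).toFinset
  have mem_A (y : α) : y ∈ A ↔ Relation.ReflTransGen R x y := by simp [A]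
  have hxA : x ∈ A := (mem_A x).2 .refl
  have even_A : Even A.card :=
    even_card_of_involution A a (fun y hy => (mem_A _).2 (((mem_A y).1 hy).tail (.inl rfl)))
      (fun y _ => ha y) (fun y _ => ha' y)
  have even_erase : Even (A.erase x).card := by
    refine even_card_of_involution _ b (fun y hy => ?_) (fun y _ => hb y) (fun y _ => hb' y)
    obtain ⟨hyx, hyA⟩ := Finset.mem_erase.1 hy
    have hybx : y ≠ b x := by
      rintro rfl
      exact hbx ((mem_A _).1 hyA)
    refine Finset.mem_erase.2 ⟨fun h => hybx ?_, ?_⟩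
    · rw [← h, hb y]
    · exact (mem_A _).2 (((mem_A y).1 hyA).tail (.inr ⟨hyx, hybx, rfl⟩))
  rw [← Finset.card_erase_add_one hxA] at even_A
  exact Nat.not_even_iff_odd.2 even_erase.add_one even_A

theorem exists_adj_dist_lt {V : Type*} {G : SimpleGraph V} {v r : V} (h : G.Reachable v r)
    (hne : v ≠ r) : ∃ u, G.Adj v u ∧ G.dist u r < G.dist v r := by
  obtain ⟨p, hp⟩ := h.exists_walk_length_eq_dist
  cases p with
  | nil => exact absurd rfl hne
  | cons hadj q =>
    refine ⟨_, hadj, ?_⟩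
    rw [← hp, SimpleGraph.Walk.length_cons]
    exact Nat.lt_succ_of_le (SimpleGraph.dist_le q)

/-- An edge slot traversed from one of its endpoints: `(s, false)` starts at the corner
`(s.1, s.2 + 1)`, and `(s, true)` starts at the corner `(s.1, s.2 + 2)`. -/
abbrev Dart (f : ℕ) := (Fin f × Fin 3) × Bool

namespace Dart

variable {f : ℕ}

/-- The corner at which a dart starts. -/
def tail (x : Dart f) : Fin f × Fin 3 := (x.1.1, x.1.2 + if x.2 then 2 else 1)

/-- The other dart starting at the same corner. It lies on the second slot at that corner, so
alternating `turn` with the gluing walks around a vertex of the quotient complex. -/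
def turn (x : Dart f) : Dart f := ((x.1.1, x.1.2 + if x.2 then 1 else 2), !x.2)

/-- The same slot traversed from its other endpoint. -/
def reverse (x : Dart f) : Dart f := (x.1, !x.2)

theorem tail_turn (x : Dart f) : x.turn.tail = x.tail := by
  have h : ∀ (a : Fin 3) (o : Bool),
      (a + if o then 1 else 2) + (if !o then 2 else 1) = a + if o then 2 else 1 := by decide
  exact Prod.ext rfl (h _ _)

theorem turn_involutive : Function.Involutive (turn : Dart f → Dart f) := by
  have h : ∀ (a : Fin 3) (o : Bool),
      (a + if o then 1 else 2) + (if !o then 1 else 2) = a := by decide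
  exact fun x => Prod.ext (Prod.ext rfl (h _ _)) (Bool.not_not _)

theorem turn_ne (x : Dart f) : x.turn ≠ x :=
  fun h => Bool.not_ne_self x.2 (congrArg Prod.snd h)

@[simp]
theorem reverse_reverse (x : Dart f) : x.reverse.reverse = x :=
  Prod.ext rfl (Bool.not_not _)

theorem exists_tail_eq_and_tail_reverse_eq (j : Fin f) {a b : Fin 3} (hab : a ≠ b) :
    ∃ x : Dart f, x.tail = (j, a) ∧ x.reverse.tail = (j, b) := by
  have h : ∀ a b : Fin 3, a ≠ b → ∃ (c : Fin 3) (o : Bool),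
      (c + if o then 2 else 1) = a ∧ (c + if !o then 2 else 1) = b := by decide
  obtain ⟨c, o, hc, hc'⟩ := h a b hab
  exact ⟨((j, c), o), Prod.ext rfl hc, Prod.ext rfl hc'⟩

end Dart

namespace GluingStory

variable {f : ℕ}

instance : Finite (GluingStory f) := Subtype.finite

/-- The darts listed by the gluings they occur in: `(k, i, o)` lies on the first (`i = false`) or
second (`i = true`) slot of the `k`-th gluing. The orientations `o` are chosen so that the gluing
matches `(k, false, o)` with `(k, true, o)`. -/
def dart (g : GluingStory f) : Fin (3 * f / 2) × Bool × Bool → Dart f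
  | (k, false, o) => ((g.1 k).1, o)
  | (k, true, o) => ((g.1 k).2.1, xor o (g.1 k).2.2)

theorem dart_bijective (g : GluingStory f) : Function.Bijective g.dart := by
  have occurs (k : Fin (3 * f / 2)) (i o : Bool) :
      (g.dart (k, i, o)).1 = (g.1 k).1 ∨ (g.dart (k, i, o)).1 = (g.1 k).2.1 := by
    cases i <;> simp [dart]
  constructor
  · rintro ⟨k, i, o⟩ ⟨k', i', o'⟩ h
    obtain rfl : k = k' := (g.2.2 _).unique (occurs k i o) (h ▸ occurs k' i' o')
    have hne := g.2.1 k
    cases i <;> cases i' <;> simp_all [dart, eq_comm]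
  · rintro ⟨s, o⟩
    obtain ⟨k, rfl | rfl, -⟩ := g.2.2 s
    · exact ⟨(k, false, o), rfl⟩
    · exact ⟨(k, true, xor o (g.1 k).2.2), by simp [dart]⟩

/-- The gluing coordinates `GluingStory.dart` as an equivalence. -/
noncomputable def dartEquiv (g : GluingStory f) : Fin (3 * f / 2) × Bool × Bool ≃ Dart f :=
  Equiv.ofBijective g.dart g.dart_bijective

/-- The position in the story of the gluing that involves the slot of a dart. -/
noncomputable def index (g : GluingStory f) (x : Dart f) : Fin (3 * f / 2) :=
  (g.dartEquiv.symm x).1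

/-- The dart with which a dart is identified by the gluing of its slot. -/
noncomputable def glue (g : GluingStory f) (x : Dart f) : Dart f :=
  g.dart (g.index x, !(g.dartEquiv.symm x).2.1, (g.dartEquiv.symm x).2.2)

/-- The vertices of the quotient complex `X(g)`. -/
abbrev Vertex (g : GluingStory f) : Type := Quot (cornerRel g)

/-- The vertex of `X(g)` at which a dart starts. -/
def vertex (g : GluingStory f) (x : Dart f) : g.Vertex := Quot.mk _ x.tail

/-- The 1-skeleton of `X(g)`, without loops and multiplicities. -/
def vertexGraph (g : GluingStory f) : SimpleGraph g.Vertex where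
  Adj u v := u ≠ v ∧ ∃ x, g.vertex x = u ∧ g.vertex x.reverse = v
  symm := ⟨by
    rintro _ _ ⟨hne, x, rfl, rfl⟩
    exact ⟨hne.symm, x.reverse, rfl, by rw [Dart.reverse_reverse]⟩⟩
  loopless := ⟨fun _ h => h.1 rfl⟩

section Glue

variable (g : GluingStory f)

theorem dartEquiv_symm_dart (c : Fin (3 * f / 2) × Bool × Bool) :
    g.dartEquiv.symm (g.dart c) = c :=
  g.dartEquiv.symm_apply_apply c

@[simp]
theorem index_dart (k : Fin (3 * f / 2)) (i o : Bool) : g.index (g.dart (k, i, o)) = k := by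
  rw [index, dartEquiv_symm_dart]

@[simp]
theorem glue_dart (k : Fin (3 * f / 2)) (i o : Bool) :
    g.glue (g.dart (k, i, o)) = g.dart (k, !i, o) := by
  rw [glue, index_dart, dartEquiv_symm_dart]

@[simp]
theorem reverse_dart (k : Fin (3 * f / 2)) (i o : Bool) :
    (g.dart (k, i, o)).reverse = g.dart (k, i, !o) := by
  cases i <;> simp [dart, Dart.reverse]

theorem glue_involutive : Function.Involutive g.glue := fun x => by
  obtain ⟨⟨k, i, o⟩, rfl⟩ := g.dart_bijective.surjective x
  simp

theorem glue_ne (x : Dart f) : g.glue x ≠ x := by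
  obtain ⟨⟨k, i, o⟩, rfl⟩ := g.dart_bijective.surjective x
  rw [glue_dart, g.dart_bijective.injective.ne_iff]
  simp

@[simp]
theorem glue_reverse (x : Dart f) : g.glue x.reverse = (g.glue x).reverse := by
  obtain ⟨⟨k, i, o⟩, rfl⟩ := g.dart_bijective.surjective x
  simp

theorem index_glue (x : Dart f) : g.index (g.glue x) = g.index x := by
  obtain ⟨⟨k, i, o⟩, rfl⟩ := g.dart_bijective.surjective x
  simp

theorem eq_of_index_eq {x y : Dart f} (h : g.index x = g.index y) :
    x = y ∨ x = g.glue y ∨ x = y.reverse ∨ x = (g.glue y).reverse := by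
  obtain ⟨⟨k, i, o⟩, rfl⟩ := g.dart_bijective.surjective x
  obtain ⟨⟨k', i', o'⟩, rfl⟩ := g.dart_bijective.surjective y
  obtain rfl : k = k' := by simpa using h
  cases i <;> cases i' <;> cases o <;> cases o' <;> simp

theorem vertex_turn (x : Dart f) : g.vertex x.turn = g.vertex x :=
  congrArg (Quot.mk _) x.tail_turn

@[simp]
theorem vertex_glue (x : Dart f) : g.vertex (g.glue x) = g.vertex x := by
  have matched (k : Fin (3 * f / 2)) (o : Bool) :
      g.vertex (g.dart (k, false, o)) = g.vertex (g.dart (k, true, o)) := by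
    refine Quot.sound ⟨k, ?_⟩
    cases o <;> cases h : (g.1 k).2.2 <;> simp [dart, Dart.tail, h]
  obtain ⟨⟨k, i, o⟩, rfl⟩ := g.dart_bijective.surjective x
  cases i <;> simp [matched]

theorem vertex_reverse_glue (x : Dart f) :
    g.vertex (g.glue x).reverse = g.vertex x.reverse := by
  rw [← glue_reverse, vertex_glue]

end Glue

theorem glue_congr {g g' : GluingStory f} {x : Dart f} (h : g.1 (g.index x) = g'.1 (g.index x)) :
    g.glue x = g'.glue x := by
  obtain ⟨⟨k, i, o⟩, rfl⟩ := g.dart_bijective.surjective x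
  rw [index_dart] at h
  have hdart (i : Bool) : g.dart (k, i, o) = g'.dart (k, i, o) := by
    cases i <;> simp only [dart, h]
  rw [glue_dart, hdart, hdart, glue_dart]

theorem eq_of_glue_eq {g g' : GluingStory f} (hglue : g.glue = g'.glue)
    (hfst : ∀ k, (g.1 k).1 = (g'.1 k).1) : g = g' := by
  refine Subtype.ext (funext fun k => ?_)
  have h : g.dart (k, true, false) = g'.dart (k, true, false) := by
    calc g.dart (k, true, false) = g.glue ((g.1 k).1, false) := (g.glue_dart k false false).symm
      _ = g'.glue ((g'.1 k).1, false) := by rw [hglue, hfst k]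
      _ = g'.dart (k, true, false) := g'.glue_dart k false false
  simp only [dart, Bool.false_bne, Prod.mk.injEq] at h
  exact Prod.ext (hfst k) (Prod.ext h.1 h.2)

/-- A parent system is the set of darts along the edges of a rooted forest in the 1-skeleton of
`X(g)`, each directed from child to parent: every vertex is the start of at most one glued pair of
darts, and some height on the vertices decreases along them. -/
structure IsParentSystem (g : GluingStory f) (P : Finset (Dart f)) : Prop where
  glue_mem : ∀ x ∈ P, g.glue x ∈ P
  eq_or_eq_glue : ∀ x ∈ P, ∀ y ∈ P, g.vertex x = g.vertex y → y = x ∨ y = g.glue x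
  exists_height : ∃ d : g.Vertex → ℕ, ∀ x ∈ P, d (g.vertex x.reverse) < d (g.vertex x)

/-- The positions in the story of the gluings that involve a dart of `P`. -/
noncomputable def indices (g : GluingStory f) (P : Finset (Dart f)) : Finset (Fin (3 * f / 2)) :=
  P.image g.index

namespace IsParentSystem

variable {g g' : GluingStory f} {P : Finset (Dart f)}

theorem glue_eq_of_notMem (hP : IsParentSystem g P)
    (hagree : ∀ k ∉ g.indices P, g.1 k = g'.1 k) {x : Dart f} (hx : x ∉ P) (hrev : x.reverse ∉ P) :
    g.glue x = g'.glue x := by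
  refine glue_congr (hagree _ fun hmem => ?_)
  obtain ⟨y, hy, hyx⟩ := Finset.mem_image.1 hmem
  rcases g.eq_of_index_eq hyx.symm with rfl | rfl | rfl | rfl
  · exact hx hy
  · exact hx (hP.glue_mem y hy)
  · exact hrev (by rwa [Dart.reverse_reverse])
  · exact hrev (by rw [Dart.reverse_reverse]; exact hP.glue_mem y hy)

/-- Walking around the vertex of `x` from `x`, one reaches `g.glue x` without using the edge of
`x` itself, so the second story has this walk too, around one of its own vertices. -/
theorem glue_eq_of_forall_vertex_eq (hP : IsParentSystem g P) (hP' : IsParentSystem g' P)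
    {x : Dart f} (hx : x ∈ P)
    (hglue : ∀ y ∉ P, g.vertex y = g.vertex x → g.glue y = g'.glue y) :
    g.glue x = g'.glue x := by
  have hvertex : ∀ y, Relation.ReflTransGen
      (fun y z => z = y.turn ∨ (y ≠ x ∧ y ≠ g.glue x ∧ z = g.glue y)) x y →
      g.vertex y = g.vertex x ∧ g'.vertex y = g'.vertex x := by
    intro y hy
    induction hy with
    | refl => exact ⟨rfl, rfl⟩
    | @tail y z _ hyz ih =>
      obtain ⟨hy, hy'⟩ := ih
      rcases hyz with rfl | ⟨hyx, hygx, rfl⟩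
      · exact ⟨by rw [vertex_turn, hy], by rw [vertex_turn, hy']⟩
      · have hyP : y ∉ P := fun hyP => (hP.eq_or_eq_glue x hx y hyP hy.symm).elim hyx hygx
        exact ⟨by rw [vertex_glue, hy], by rw [hglue y hyP hy, vertex_glue, hy']⟩
  have hsame := (hvertex _ (reflTransGen_avoiding_edge Dart.turn_involutive Dart.turn_ne
    g.glue_involutive g.glue_ne x)).2
  exact (hP'.eq_or_eq_glue x hx _ (hP.glue_mem x hx) hsame.symm).resolve_left (g.glue_ne x)

theorem glue_eq_of_mem (hP : IsParentSystem g P) (hP' : IsParentSystem g' P)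
    (hagree : ∀ k ∉ g.indices P, g.1 k = g'.1 k) {x : Dart f} (hx : x ∈ P) :
    g.glue x = g'.glue x := by
  obtain ⟨d, hd⟩ := hP.exists_height
  -- The gluings are recovered from the leaves of the forest down to its roots.
  have wf : WellFounded fun y x : Dart f => d (g.vertex x) < d (g.vertex y) :=
    have : IsTrans (Dart f) fun y x => d (g.vertex x) < d (g.vertex y) :=
      ⟨fun _ _ _ h h' => h'.trans h⟩
    have : Std.Irrefl fun y x : Dart f => d (g.vertex x) < d (g.vertex y) := ⟨fun _ => lt_irrefl _⟩
    Finite.wellFounded_of_trans_of_irrefl _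
  induction x using wf.induction with
  | _ x ih =>
  refine hP.glue_eq_of_forall_vertex_eq hP' hx fun y hy hyx => ?_
  by_cases hrev : y.reverse ∈ P
  · have hlt := hd _ hrev
    rw [Dart.reverse_reverse, hyx] at hlt
    simpa using congrArg Dart.reverse (ih _ hlt hrev)
  · exact hP.glue_eq_of_notMem hagree hy hrev

theorem glue_eq (hP : IsParentSystem g P) (hP' : IsParentSystem g' P)
    (hagree : ∀ k ∉ g.indices P, g.1 k = g'.1 k) : g.glue = g'.glue := by
  funext x
  by_cases hx : x ∈ P
  · exact hP.glue_eq_of_mem hP' hagree hx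
  by_cases hrev : x.reverse ∈ P
  · simpa using congrArg Dart.reverse (hP.glue_eq_of_mem hP' hagree hrev)
  · exact hP.glue_eq_of_notMem hagree hx hrev

end IsParentSystem

section Existence

variable {g : GluingStory f} {Q : Finset (Dart f)} {d : g.Vertex → ℕ}

theorem isParentSystem_union_image_glue (hQ : Set.InjOn g.vertex Q)
    (hd : ∀ x ∈ Q, d (g.vertex x.reverse) < d (g.vertex x)) :
    IsParentSystem g (Q ∪ Q.image g.glue) where
  glue_mem x hx := by
    simp only [Finset.mem_union, Finset.mem_image] at hx ⊢
    rcases hx with hx | ⟨y, hy, rfl⟩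
    · exact .inr ⟨x, hx, rfl⟩
    · exact .inl (by rwa [g.glue_involutive y])
  eq_or_eq_glue x hx y hy hxy := by
    simp only [Finset.mem_union, Finset.mem_image] at hx hy
    have mem_pair {z : Dart f} (hz : z ∈ Q ∨ ∃ a ∈ Q, g.glue a = z) :
        ∃ a ∈ Q, g.vertex a = g.vertex z ∧ (z = a ∨ z = g.glue a) := by
      rcases hz with hz | ⟨a, ha, rfl⟩
      · exact ⟨z, hz, rfl, .inl rfl⟩
      · exact ⟨a, ha, (g.vertex_glue a).symm, .inr rfl⟩
    obtain ⟨a, ha, hax, hx⟩ := mem_pair hx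
    obtain ⟨b, hb, hby, hy⟩ := mem_pair hy
    obtain rfl : a = b := hQ ha hb (hax.trans (hxy.trans hby.symm))
    rcases hx with rfl | rfl <;> rcases hy with rfl | rfl <;> simp [g.glue_involutive _]
  exists_height := by
    refine ⟨d, fun x hx => ?_⟩
    rcases Finset.mem_union.1 hx with hx | hx
    · exact hd x hx
    · obtain ⟨y, hy, rfl⟩ := Finset.mem_image.1 hx
      rw [vertex_reverse_glue, vertex_glue]
      exact hd y hy

theorem card_indices_union_image_glue (hQ : Set.InjOn g.vertex Q)
    (hd : ∀ x ∈ Q, d (g.vertex x.reverse) < d (g.vertex x)) :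
    (g.indices (Q ∪ Q.image g.glue)).card = Q.card := by
  have himage : g.indices (Q ∪ Q.image g.glue) = Q.image g.index := by
    simp only [indices, Finset.image_union, Finset.image_image, Function.comp_def, index_glue,
      Finset.union_self]
  rw [himage]
  refine Finset.card_image_of_injOn fun x hx y hy hxy => ?_
  have hdx := hd x hx
  have hdy := hd y hy
  rcases g.eq_of_index_eq hxy with rfl | rfl | rfl | rfl
  · rfl
  · exact hQ hx hy (g.vertex_glue y)
  · rw [Dart.reverse_reverse] at hdx
    exact absurd hdx hdy.asymm
  · rw [Dart.reverse_reverse, vertex_glue, vertex_reverse_glue] at hdx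
    exact absurd hdx hdy.asymm

theorem exists_isParentSystem (hg : g.vertexGraph.Connected) :
    ∃ P, IsParentSystem g P ∧ (g.indices P).card = Nat.card g.Vertex - 1 := by
  classical
  obtain ⟨root⟩ := hg.nonempty
  have : Fintype g.Vertex := Fintype.ofFinite _
  have exists_parent (v : {v // v ≠ root}) : ∃ x, g.vertex x = v.1 ∧
      g.vertexGraph.dist (g.vertex x.reverse) root < g.vertexGraph.dist v.1 root := by
    obtain ⟨u, ⟨-, x, hx, rfl⟩, hlt⟩ := exists_adj_dist_lt (hg v.1 root) v.2
    exact ⟨x, hx, hlt⟩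
  choose parent hstart hdist using exists_parent
  have hinj : Set.InjOn g.vertex (Finset.univ.image parent : Finset (Dart f)) := by
    simp only [Finset.coe_image, Finset.coe_univ, Set.image_univ]
    rintro _ ⟨u, rfl⟩ _ ⟨v, rfl⟩ huv
    rw [hstart, hstart] at huv
    rw [Subtype.ext huv]
  let d (v : g.Vertex) : ℕ := g.vertexGraph.dist v root
  have hdesc : ∀ x ∈ Finset.univ.image parent, d (g.vertex x.reverse) < d (g.vertex x) := by
    refine Finset.forall_mem_image.2 fun v _ => ?_
    rw [hstart]
    exact hdist v
  have hcard : (Finset.univ.image parent).card = Nat.card g.Vertex - 1 := by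
    have parent_inj : Function.Injective parent := fun u v huv =>
      Subtype.ext (by rw [← hstart u, huv, hstart v])
    rw [Finset.card_image_of_injective _ parent_inj, Finset.card_univ, Fintype.card_subtype_compl,
      Fintype.card_subtype_eq, Nat.card_eq_fintype_card]
  exact ⟨_, isParentSystem_union_image_glue hinj hdesc,
    (card_indices_union_image_glue hinj hdesc).trans hcard⟩

end Existence

theorem reachable_corners (g : GluingStory f) (j : Fin f) (a b : Fin 3) :
    g.vertexGraph.Reachable (Quot.mk _ (j, a)) (Quot.mk _ (j, b)) := by
  by_cases h : Quot.mk (cornerRel g) (j, a) = Quot.mk _ (j, b)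
  · rw [h]
  · obtain ⟨x, hx, hx'⟩ :=
      Dart.exists_tail_eq_and_tail_reverse_eq j (a := a) (b := b) (by rintro rfl; exact h rfl)
    exact SimpleGraph.Adj.reachable
      ⟨h, x, congrArg (Quot.mk _) hx, congrArg (Quot.mk _) hx'⟩

theorem vertexGraph_connected_of_isoToSurface {g : GluingStory f} {w : ℕ}
    {F : Finset (Finset (Fin w))} (hF : IsClosedSurface F) (hg : IsoToSurface g F) :
    g.vertexGraph.Connected := by
  obtain ⟨φ, hφ, -, -, himage⟩ := hg
  obtain ⟨hne, -, -, hcover, -, hchain⟩ := hF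
  have reachable_face {t : Finset (Fin w)} (ht : t ∈ F) {u v : g.Vertex} (hu : φ u ∈ t)
      (hv : φ v ∈ t) : g.vertexGraph.Reachable u v := by
    rw [← himage] at ht
    obtain ⟨j, -, rfl⟩ := Finset.mem_image.1 ht
    have is_corner {u : g.Vertex} (hu : φ u ∈ ({φ (Quot.mk _ (j, 0)), φ (Quot.mk _ (j, 1)),
        φ (Quot.mk _ (j, 2))} : Finset (Fin w))) : ∃ a, u = Quot.mk _ (j, a) := by
      simp only [Finset.mem_insert, Finset.mem_singleton, hφ.injective.eq_iff] at hu
      rcases hu with h | h | h <;> exact ⟨_, h⟩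
    obtain ⟨a, rfl⟩ := is_corner hu
    obtain ⟨b, rfl⟩ := is_corner hv
    exact g.reachable_corners j a b
  have reachable_chain {t t' : Finset (Fin w)} (ht : t ∈ F) (htt' : Relation.ReflTransGen
      (fun s s' => s ∈ F ∧ s' ∈ F ∧ (s ∩ s').card = 2) t t') {u : g.Vertex} (hu : φ u ∈ t) :
      ∀ v, φ v ∈ t' → g.vertexGraph.Reachable u v := by
    induction htt' with
    | refl => exact fun v hv => reachable_face ht hu hv
    | tail _ hss' ih =>
      intro v hv
      obtain ⟨-, hs', hcard⟩ := hss'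
      obtain ⟨p, hp⟩ := Finset.card_pos.1 (hcard ▸ Nat.two_pos)
      obtain ⟨m, rfl⟩ := hφ.surjective p
      obtain ⟨hm, hm'⟩ := Finset.mem_inter.1 hp
      exact (ih m hm).trans (reachable_face hs' hm' hv)
  obtain ⟨t, ht⟩ := hne
  obtain ⟨j, -, -⟩ := Finset.mem_image.1 (himage ▸ ht)
  refine (SimpleGraph.connected_iff _).2 ⟨fun u v => ?_, ⟨Quot.mk _ (j, 0)⟩⟩
  obtain ⟨t, ht, hu⟩ := hcover (φ u)
  obtain ⟨t', ht', hv⟩ := hcover (φ v)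
  exact reachable_chain ht (hchain t ht t' ht') hu v hv

theorem card_vertex_of_isoToSurface {g : GluingStory f} {w : ℕ}
    {F : Finset (Finset (Fin w))} (hg : IsoToSurface g F) : Nat.card g.Vertex = w := by
  obtain ⟨φ, hφ, -⟩ := hg
  rw [Nat.card_eq_of_bijective φ hφ, Nat.card_fin]

/-- A story is determined by its parent system, the first slots of all gluings, and the rest of
the gluings outside the parent system. -/
theorem ncard_isParentSystem_le (P : Finset (Dart f)) (K : Finset (Fin (3 * f / 2))) :
    {g : GluingStory f | IsParentSystem g P ∧ g.indices P = K}.ncard ≤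
      (3 * f) ^ (3 * f / 2) * (6 * f) ^ (3 * f / 2 - K.card) := by
  let code (g : GluingStory f) : (Fin (3 * f / 2) → Fin f × Fin 3) ×
      ({k // k ∉ K} → (Fin f × Fin 3) × Bool) :=
    (fun k => (g.1 k).1, fun k => (g.1 k.1).2)
  have code_injOn : Set.InjOn code {g | IsParentSystem g P ∧ g.indices P = K} := by
    rintro g ⟨hg, rfl⟩ g' ⟨hg', -⟩ hcode
    have hfst (k) : (g.1 k).1 = (g'.1 k).1 := congrFun (congrArg Prod.fst hcode) k
    refine eq_of_glue_eq (hg.glue_eq hg' fun k hk => ?_) hfst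
    exact Prod.ext (hfst k) (congrFun (congrArg Prod.snd hcode) ⟨k, hk⟩)
  have hle := Set.ncard_le_ncard_of_injOn code (fun _ _ => Set.mem_univ _) code_injOn
  refine hle.trans_eq ?_
  rw [Set.ncard_univ, Nat.card_eq_fintype_card]
  simp only [Fintype.card_prod, Fintype.card_fun, Fintype.card_fin, Fintype.card_bool,
    Fintype.card_subtype_compl, Fintype.card_coe]
  congr 2 <;> ring

theorem card_connected_le (f w : ℕ) :
    Nat.card {g : GluingStory f // g.vertexGraph.Connected ∧ Nat.card g.Vertex = w} ≤
      2 ^ (6 * f) * 2 ^ (3 * f / 2) *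
        ((3 * f) ^ (3 * f / 2) * (6 * f) ^ (3 * f / 2 - (w - 1))) := by
  let S (c : Finset (Dart f) × {K : Finset (Fin (3 * f / 2)) // K.card = w - 1}) :
      Set (GluingStory f) := {g | IsParentSystem g c.1 ∧ g.indices c.1 = c.2}
  have hcover : {g : GluingStory f | g.vertexGraph.Connected ∧ Nat.card g.Vertex = w} ⊆
      ⋃ c, S c := by
    rintro g ⟨hg, rfl⟩
    obtain ⟨P, hP, hcard⟩ := exists_isParentSystem hg
    exact Set.mem_iUnion.2 ⟨(P, ⟨g.indices P, hcard⟩), hP, rfl⟩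
  have hS (c) : (S c).ncard ≤ (3 * f) ^ (3 * f / 2) * (6 * f) ^ (3 * f / 2 - (w - 1)) := by
    simpa only [c.2.2] using ncard_isParentSystem_le c.1 c.2.1
  calc _ ≤ (⋃ c, S c).ncard := Set.ncard_le_ncard hcover
    _ ≤ ∑ c, (S c).ncard := Set.ncard_iUnion_le_of_fintype S
    _ ≤ ∑ _c, _ := Finset.sum_le_sum fun c _ => hS c
    _ = 2 ^ (6 * f) * (3 * f / 2).choose (w - 1) * _ := by
        rw [Finset.sum_const, Finset.card_univ, smul_eq_mul, Fintype.card_prod, Fintype.card_finset,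
          Fintype.card_finset_len]
        simp only [Fintype.card_prod, Fintype.card_fin, Fintype.card_bool]
        congr 3
        ring
    _ ≤ _ := by
        gcongr
        exact Nat.choose_le_two_pow _ _

theorem card_vertex_le {g : GluingStory f} (hg : g.vertexGraph.Connected) :
    Nat.card g.Vertex ≤ 3 * f / 2 + 1 := by
  obtain ⟨P, -, hcard⟩ := exists_isParentSystem hg
  have hle := card_finset_fin_le (g.indices P)
  omega

theorem card_connected_mul_pow_le (f w : ℕ) :
    Nat.card {g : GluingStory f // g.vertexGraph.Connected ∧ Nat.card g.Vertex = w} * w ^ w ≤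
      (2 ^ 9 * 6 ^ 4) ^ f * f ^ (3 * f) := by
  rcases isEmpty_or_nonempty
    {g : GluingStory f // g.vertexGraph.Connected ∧ Nat.card g.Vertex = w} with h | ⟨g, hg, hgw⟩
  · simp
  have := hg.nonempty
  have hw : 0 < w := hgw ▸ Nat.card_pos
  have hf : 0 < f := by
    obtain ⟨⟨j, -⟩, -⟩ := (Classical.arbitrary g.Vertex).exists_rep
    exact j.pos
  have hwf : w ≤ 3 * f / 2 + 1 := hgw ▸ card_vertex_le hg
  have hn : 2 * (3 * f / 2) ≤ 3 * f := Nat.mul_div_le _ _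
  have hcount := card_connected_le f w
  generalize 3 * f / 2 = n at hwf hn hcount
  calc _ ≤ 2 ^ (6 * f) * 2 ^ n * ((3 * f) ^ n * (6 * f) ^ (n - (w - 1))) * (6 * f) ^ w := by
        gcongr
        omega
    _ ≤ 2 ^ (6 * f) * 2 ^ (2 * f) * ((6 * f) ^ n * (6 * f) ^ (n - (w - 1))) * (6 * f) ^ w := by
        gcongr <;> omega
    _ = 2 ^ (8 * f) * (6 * f) ^ (n + (n - (w - 1)) + w) := by ring
    _ ≤ 2 ^ (8 * f) * (6 * f) ^ (3 * f + 1) :=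
        Nat.mul_le_mul_left _ (Nat.pow_le_pow_right (by omega) (by omega))
    _ = 2 ^ (8 * f) * (6 ^ (3 * f + 1) * f) * f ^ (3 * f) := by rw [mul_pow]; ring
    _ ≤ 2 ^ (8 * f) * (6 ^ (4 * f) * 2 ^ f) * f ^ (3 * f) := by
        gcongr
        · norm_num
        · omega
        · exact Nat.lt_two_pow_self.le
    _ = (2 ^ 9 * 6 ^ 4) ^ f * f ^ (3 * f) := by rw [mul_pow, ← pow_mul, ← pow_mul]; ring

end GluingStory

theorem gluingStory_many_vertices_count_general :
    ∃ C : ℝ, 0 < C ∧ ∀ f w : ℕ,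
      (Nat.card {g : GluingStory f // g.vertexGraph.Connected ∧ Nat.card g.Vertex = w} : ℝ) ≤
        C ^ f * (f : ℝ) ^ (3 * (f : ℝ)) * (w : ℝ) ^ (-(w : ℝ)) := by
  refine ⟨2 ^ 9 * 6 ^ 4, by norm_num, fun f w => ?_⟩
  have hpow : (0 : ℝ) < (w : ℝ) ^ w := by exact_mod_cast Nat.pow_self_pos
  have hcount := GluingStory.card_connected_mul_pow_le f w
  rw [Real.rpow_neg w.cast_nonneg, Real.rpow_natCast, ← div_eq_mul_inv, le_div_iff₀ hpow]
  exact_mod_cast hcount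

/-- **Lemma (gluing stories with many vertices are rare).**
For every `δ > 0` there is a constant `C_δ` such that for every even positive integer
`f` and every positive integer `w`, the number of gluing stories `g ∈ GS(f)` whose
quotient complex `X(g)` is simplicially isomorphic to a connected triangulated closed
surface with `w` vertices is at most `C_δ^f · f^(3f) · w^(-(1-δ)w)`. -/
theorem gluingStory_many_vertices_count (δ : ℝ) (hδ : 0 < δ) :
    ∃ C : ℝ, 0 < C ∧ ∀ f w : ℕ, 0 < f → Even f → 0 < w →
      (Nat.card {g : GluingStory f //
          ∃ F : Finset (Finset (Fin w)), IsClosedSurface F ∧ IsoToSurface g F} : ℝ) ≤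
        C ^ f * (f : ℝ) ^ (3 * (f : ℝ)) * (w : ℝ) ^ (-(1 - δ) * w) := by
  obtain ⟨C, hC, hcount⟩ := gluingStory_many_vertices_count_general
  refine ⟨C, hC, fun f w _ _ hw => ?_⟩
  calc _ ≤ (Nat.card {g : GluingStory f //
          g.vertexGraph.Connected ∧ Nat.card g.Vertex = w} : ℝ) := by
        refine Nat.cast_le.2 (Finite.card_le_of_embedding (Subtype.impEmbedding _ _ ?_))
        exact fun g ⟨F, hF, hg⟩ => ⟨GluingStory.vertexGraph_connected_of_isoToSurface hF hg,
          GluingStory.card_vertex_of_isoToSurface hg⟩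
    _ ≤ C ^ f * (f : ℝ) ^ (3 * (f : ℝ)) * (w : ℝ) ^ (-(w : ℝ)) := hcount f w
    _ ≤ _ := by
        gcongr
        · exact_mod_cast hw
        · nlinarith [w.cast_nonneg (α := ℝ)]
end

section
/- Let β > 0 and let n be a positive integer. If H is a simple graph on fewer than n vertices with at least n^{1+β} edges, then H contains a cycle of length at most 2⌈1/β⌉ + 1. -/
/-!
Call a graph locally dense with ratio `a` if every vertex set `T` meets at least `a * |T|` edges.
A graph with at least `a * |V|` edges becomes locally dense by repeatedly discarding sets that meet
too few edges, since each removal preserves the inequality. Let `B r` be the set of vertices at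
distance less than `r` from a fixed vertex. Every edge meeting `B r` is the last edge of a path of
length at most `r` from the centre. If there are no cycles of length at most `2 * r`, two such paths
with the same end coincide, so that `B r` meets fewer than `|B (r + 1)|` edges. In a locally dense
graph this gives `a * |B r| < |B (r + 1)|`, and hence `a ^ k < |V|` when there are no cycles of
length at most `2 * k`. The theorem is the case `a = n ^ β`, `k = ⌈1 / β⌉`.
-/

open SimpleGraph

variable {V : Type*} {G : SimpleGraph V} {a : ℝ} {k r : ℕ} {v x y : V} {e : Sym2 V}

/-- The edges of `G` with at least one end in `T`, those inside `T` included. -/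
def incidentEdges (G : SimpleGraph V) (T : Set V) : Set (Sym2 V) :=
  {e ∈ G.edgeSet | ∃ x ∈ T, x ∈ e}

/-- Local density: every set of vertices meets at least `a` times as many edges as it has elements.
This is the expansion hypothesis under which balls grow by a factor `a`. It is meant for finite
graphs, as `Set.ncard` is `0` on infinite sets. -/
def IsLocallyDense (G : SimpleGraph V) (a : ℝ) : Prop :=
  ∀ T : Set V, a * T.ncard ≤ (incidentEdges G T).ncard

theorem image_edgeSet_induce_compl (G : SimpleGraph V) (T : Set V) :
    Sym2.map (↑) '' (G.induce Tᶜ).edgeSet = G.edgeSet \ incidentEdges G T := by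
  ext e
  induction e with | _ x y
  constructor
  · rintro ⟨f, hf, hfe⟩
    induction f with | _ x' y'
    rw [← hfe]
    refine ⟨hf, fun ⟨_, z, hz, hzf⟩ ↦ ?_⟩
    obtain rfl | rfl := Sym2.mem_iff.1 hzf
    exacts [x'.2 hz, y'.2 hz]
  · intro ⟨hxy, hnot⟩
    have hT (z : V) (hz : z ∈ s(x, y)) : z ∈ Tᶜ := fun hzT ↦ hnot ⟨hxy, z, hzT, hz⟩
    exact ⟨s(⟨x, hT x (Sym2.mem_mk_left x y)⟩, ⟨y, hT y (Sym2.mem_mk_right x y)⟩), hxy, rfl⟩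

theorem ncard_edgeSet_induce_compl_add [Finite V] (G : SimpleGraph V) (T : Set V) :
    (G.induce Tᶜ).edgeSet.ncard + (incidentEdges G T).ncard = G.edgeSet.ncard := by
  rw [← Set.ncard_image_of_injective _ (Sym2.map.injective Subtype.val_injective),
    image_edgeSet_induce_compl]
  exact Set.ncard_sdiff_add_ncard_of_subset (Set.sep_subset _ _)

theorem eq_of_isPath_of_length_add_lt_egirth {p q : G.Walk x y} (hp : p.IsPath) (hq : q.IsPath)
    (h : (p.length + q.length : ℕ) < G.egirth) : p = q := by
  by_contra hpq
  obtain ⟨_, _, _, c, hc, hlen⟩ := hp.exists_isCycle_length_le_add_of_ne hq hpq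
  exact h.not_ge ((egirth_le_length hc).trans (by exact_mod_cast hlen))

theorem exists_isPath_penultimate_eq_of_edist_le (hxy : G.Adj x y) (hle : G.edist v x ≤ G.edist v y)
    (hr : G.edist v x < r) :
    v ≠ y ∧ ∃ p : G.Walk v y, p.IsPath ∧ p.length ≤ r ∧ p.penultimate = x := by
  classical
  have hreach : G.Reachable v x := reachable_of_edist_ne_top hr.ne_top
  obtain ⟨p, hp, hlen⟩ := hreach.exists_path_of_dist
  have hlen' : (p.length : ℕ∞) = G.edist v x := by rw [hlen, hreach.coe_dist_eq_edist]
  have hy : y ∉ p.support := fun hy ↦ by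
    have hlt := p.length_takeUntil_lt_length hy hxy.ne'
    have : (p.length : ℕ∞) ≤ (p.takeUntil y hy).length :=
      hlen'.trans_le (hle.trans (edist_le _))
    exact hlt.not_ge (by exact_mod_cast this)
  refine ⟨fun hv ↦ hy (hv ▸ p.start_mem_support), p.concat hxy, hp.concat hy hxy, ?_,
    p.penultimate_concat hxy⟩
  rw [Walk.length_concat]
  exact_mod_cast hlen'.trans_lt hr

theorem exists_isPath_of_mem_incidentEdges_ball (he : e ∈ incidentEdges G (G.ball v r)) :
    ∃ u, v ≠ u ∧ ∃ p : G.Walk v u, p.IsPath ∧ p.length ≤ r ∧ s(p.penultimate, u) = e := by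
  obtain ⟨hadj, x, hx, y, rfl⟩ := he
  rw [mem_ball, edist_comm] at hx
  rcases le_total (G.edist v x) (G.edist v y) with hle | hle
  · obtain ⟨hv, p, hp, hlen, hpen⟩ := exists_isPath_penultimate_eq_of_edist_le hadj hle hx
    exact ⟨y, hv, p, hp, hlen, by rw [hpen]⟩
  · obtain ⟨hv, p, hp, hlen, hpen⟩ :=
      exists_isPath_penultimate_eq_of_edist_le hadj.symm hle (hle.trans_lt hx)
    exact ⟨x, hv, p, hp, hlen, by rw [hpen, Sym2.eq_swap]⟩

theorem ncard_incidentEdges_ball_lt [Finite V] (h : (2 * r : ℕ) < G.egirth) (v : V) :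
    (incidentEdges G (G.ball v r)).ncard < (G.ball v (r + 1)).ncard := by
  have : Nonempty V := ⟨v⟩
  choose! far hfar using
    fun e (he : e ∈ incidentEdges G (G.ball v r)) ↦ exists_isPath_of_mem_incidentEdges_ball he
  have hmaps : ∀ e ∈ incidentEdges G (G.ball v r), far e ∈ G.ball v (r + 1) \ {v} := by
    intro e he
    obtain ⟨hv, p, -, hlen, -⟩ := hfar e he
    refine ⟨?_, hv.symm⟩
    rw [mem_ball, edist_comm]
    exact (edist_le p).trans_lt (by exact_mod_cast Nat.lt_succ_of_le hlen)
  have hinj : Set.InjOn far (incidentEdges G (G.ball v r)) := by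
    intro e he e' he' hee'
    obtain ⟨-, p, hp, hplen, hpe⟩ := hfar e he
    obtain ⟨-, q, hq, hqlen, hqe⟩ := hee' ▸ hfar e' he'
    have hpq : (p.length + q.length : ℕ) < G.egirth :=
      lt_of_le_of_lt (by exact_mod_cast (by lia)) h
    rw [← hpe, ← hqe, eq_of_isPath_of_length_add_lt_egirth hp hq hpq]
  have hv : v ∈ G.ball v (r + 1) := mem_ball_self (by simp)
  exact (Set.ncard_le_ncard_of_injOn far hmaps hinj).trans_lt
    (Set.ncard_sdiff_singleton_lt_of_mem hv)

theorem IsLocallyDense.mul_ncard_ball_lt [Finite V] (hG : IsLocallyDense G a)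
    (h : (2 * r : ℕ) < G.egirth) (v : V) :
    a * (G.ball v r).ncard < (G.ball v (r + 1)).ncard :=
  (hG _).trans_lt (by exact_mod_cast ncard_incidentEdges_ball_lt h v)

theorem IsLocallyDense.pow_lt_ncard_ball [Finite V] (hG : IsLocallyDense G a) (ha : 0 ≤ a)
    (hr : 1 ≤ r) (h : (2 * r : ℕ) < G.egirth) (v : V) : a ^ r < (G.ball v (r + 1)).ncard := by
  induction r, hr using Nat.le_induction with
  | base => simpa using hG.mul_ncard_ball_lt h v
  | succ r _ ih =>
    have hlt := ih (lt_of_le_of_lt (by gcongr; simp) h)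
    calc a ^ (r + 1) = a * a ^ r := pow_succ' a r
      _ ≤ a * (G.ball v (r + 1)).ncard := by gcongr
      _ < (G.ball v (↑(r + 1) + 1)).ncard := by exact_mod_cast hG.mul_ncard_ball_lt h v

theorem IsLocallyDense.pow_lt_card [Finite V] [Nonempty V] (hG : IsLocallyDense G a) (ha : 0 ≤ a)
    (hk : 1 ≤ k) (h : (2 * k : ℕ) < G.egirth) : a ^ k < Nat.card V :=
  (hG.pow_lt_ncard_ball ha hk h (Classical.arbitrary V)).trans_le
    (by exact_mod_cast Set.ncard_le_card _)

theorem exists_dense_induce_of_not_isLocallyDense [Finite V] (hG : ¬ IsLocallyDense G a)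
    (hE : a * Nat.card V ≤ G.edgeSet.ncard) :
    ∃ S : Set V, S.Nonempty ∧ S.ncard < Nat.card V ∧
      a * S.ncard ≤ (G.induce S).edgeSet.ncard := by
  obtain ⟨T, hT⟩ := not_forall.1 hG
  rw [not_le] at hT
  have hcard : T.ncard + Tᶜ.ncard = Nat.card V := Set.ncard_add_ncard_compl T
  have hdense : a * Tᶜ.ncard < (G.induce Tᶜ).edgeSet.ncard := by
    rw [← hcard, ← ncard_edgeSet_induce_compl_add G T] at hE
    push_cast at hE
    linarith
  refine ⟨Tᶜ, ?_, ?_, hdense.le⟩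
  · by_contra hempty
    rw [Set.not_nonempty_iff_eq_empty] at hempty
    rw [hempty] at hdense
    simp [Set.eq_empty_of_isEmpty] at hdense
  · have hT0 : T.ncard ≠ 0 := fun h0 ↦ hT.not_ge (by simp [h0])
    lia

theorem pow_lt_card_of_lt_egirth [Finite V] [Nonempty V] (ha : 0 ≤ a)
    (hE : a * Nat.card V ≤ G.edgeSet.ncard) (hk : 1 ≤ k) (h : (2 * k : ℕ) < G.egirth) :
    a ^ k < Nat.card V := by
  induction hN : Nat.card V using Nat.strong_induction_on generalizing V with | _ N ih
  subst hN
  by_cases hG : IsLocallyDense G a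
  · exact hG.pow_lt_card ha hk h
  obtain ⟨S, hS, hlt, hdense⟩ := exists_dense_induce_of_not_isLocallyDense hG hE
  have : Nonempty S := hS.to_subtype
  have hgirth : (2 * k : ℕ) < (G.induce S).egirth :=
    h.trans_le (Embedding.induce S).isContained.egirth_le
  calc a ^ k < Nat.card S := ih _ hlt hdense hgirth rfl
    _ ≤ Nat.card V := by exact_mod_cast hlt.le

theorem exists_isCycle_length_le_of_card_le_pow [Finite V] [Nonempty V] (ha : 0 ≤ a)
    (hE : a * Nat.card V ≤ G.edgeSet.ncard) (hk : 1 ≤ k) (hV : Nat.card V ≤ a ^ k) :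
    ∃ (v : V) (c : G.Walk v v), c.IsCycle ∧ c.length ≤ 2 * k := by
  by_contra! hlong
  have hle : (2 * k + 1 : ℕ) ≤ G.egirth :=
    le_egirth.2 fun v c hc ↦ by exact_mod_cast hlong v c hc
  have hlt : (2 * k : ℕ) < G.egirth := lt_of_lt_of_le (by exact_mod_cast Nat.lt_succ_self _) hle
  exact hV.not_gt (pow_lt_card_of_lt_egirth ha hE hk hlt)

theorem moore_bound_general {β n : ℝ} (hβ : 0 < β) (hn : 0 < n) [Fintype V] (H : SimpleGraph V)
    [DecidableRel H.Adj] (hV : Fintype.card V ≤ n) (hE : n ^ (1 + β) ≤ H.edgeFinset.card) :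
    ∃ (v : V) (c : H.Walk v v), c.IsCycle ∧ c.length ≤ 2 * ⌈1 / β⌉₊ := by
  have hEpos : (0 : ℝ) < H.edgeFinset.card := (Real.rpow_pos_of_pos hn _).trans_le hE
  have hne : Nonempty V := by
    obtain ⟨e, -⟩ := Finset.card_pos.1 (Nat.cast_pos.1 hEpos)
    exact ⟨e.out.1⟩
  have hn1 : 1 ≤ n := le_trans (by exact_mod_cast Fintype.card_pos) hV
  have hceil : 1 ≤ β * ⌈1 / β⌉₊ := by
    rw [← div_le_iff₀' hβ]
    exact Nat.le_ceil _
  have hdense : n ^ β * Nat.card V ≤ H.edgeSet.ncard := by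
    calc n ^ β * Nat.card V ≤ n ^ β * n := by rw [Nat.card_eq_fintype_card]; gcongr
      _ = n ^ (1 + β) := by rw [add_comm, Real.rpow_add_one hn.ne']
      _ ≤ H.edgeSet.ncard := by rwa [Set.ncard_eq_toFinset_card']
  have hpow : Nat.card V ≤ (n ^ β) ^ ⌈1 / β⌉₊ := by
    calc (Nat.card V : ℝ) ≤ n := by rwa [Nat.card_eq_fintype_card]
      _ ≤ n ^ (β * ⌈1 / β⌉₊) := Real.self_le_rpow_of_one_le hn1 hceil
      _ = (n ^ β) ^ ⌈1 / β⌉₊ := Real.rpow_mul_natCast hn.le _ _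
  exact exists_isCycle_length_le_of_card_le_pow (by positivity) hdense
    (Nat.ceil_pos.2 (by positivity)) hpow

/-- **Lemma (Moore bound).**
Let `β > 0` and `n` a positive integer. If `H` is a simple graph on fewer than `n`
vertices with at least `n^(1+β)` edges, then `H` contains a cycle of length at most
`2⌈1/β⌉ + 1`. -/
theorem moore_bound (β : ℝ) (hβ : 0 < β) (n : ℕ) (hn : 0 < n)
    (V : Type) [Fintype V] [DecidableEq V] (H : SimpleGraph V) [DecidableRel H.Adj]
    (hV : Fintype.card V < n)
    (hE : (n : ℝ) ^ ((1 : ℝ) + β) ≤ H.edgeFinset.card) :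
    ∃ (v : V) (c : H.Walk v v), c.IsCycle ∧ c.length ≤ 2 * ⌈1 / β⌉₊ + 1 := by
  obtain ⟨v, c, hc, hlen⟩ := moore_bound_general hβ (Nat.cast_pos.2 hn) H
    (Nat.cast_le.2 hV.le) hE
  exact ⟨v, c, hc, hlen.trans (Nat.le_succ _)⟩
end

section
/- Let 0 < α < 1/2 and ε > 0, and let p = n^{α−1}. Then with high probability, a random complex Y drawn from Y(n,p) satisfies Σ_τ (Fill_Y(τ))² ≥ C(n,3) · (n^{2−2α−ε})², where the sum is over all C(n,3) three-element subsets τ of {1,…,n}. -/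
open scoped ENNReal

/-- The 3-element subsets of the vertex set `Fin n` (the possible faces). -/
abbrev Tri (n : ℕ) := {t : Finset (Fin n) // t.card = 3}

/-- The probability of the event `E` under the Linial–Meshulam measure `Y(n,p)`:
a complex is a configuration `ω : Tri n → Bool` recording which faces are present
(the vertex set is `Fin n` and all edges are present), each face independently
present with probability `p`; the probability of `E` is the sum over configurations
in `E` of `∏ (p if the face is present, else 1-p)`. -/
noncomputable def lmProb (n : ℕ) (p : ℝ≥0∞) (E : Set (Tri n → Bool)) : ℝ≥0∞ :=
  ∑' ω : E, ∏ t : Tri n, (if (ω : Tri n → Bool) t then p else 1 - p)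

/-- `y` is a filling of `τ` in the complex `ω`: a set of faces of `ω` such that a
2-element subset of the vertex set is contained in an odd number of members of `y`
exactly when it is a subset of `τ`. -/
def IsFilling (n : ℕ) (ω : Tri n → Bool) (τ : Finset (Fin n))
    (y : Finset (Finset (Fin n))) : Prop :=
  (∀ t ∈ y, ∃ h : t.card = 3, ω ⟨t, h⟩ = true) ∧
  ∀ e : Finset (Fin n), e.card = 2 →
    (Odd ((y.filter (fun t => e ⊆ t)).card) ↔ e ⊆ τ)

/-- `fill n ω τ` is the filling area of `τ` in `ω`: the minimum cardinality of a
filling of `τ`, as an extended natural number (`⊤` if no filling exists). -/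
noncomputable def fill (n : ℕ) (ω : Tri n → Bool) (τ : Finset (Fin n)) : ℕ∞ :=
  ⨅ y : {y : Finset (Finset (Fin n)) // IsFilling n ω τ y},
    ((y : Finset (Finset (Fin n))).card : ℕ∞)

/-! A minimal filling of a triangle `τ` is obtained from `τ` by gluing one triangle at a time to a
free edge, so it is a union of discs recorded by a binary tree. Reading the labels of that tree in
order traces a closed walk that uses every edge an even number of times, and the shape of the tree
together with this walk determine the filling.

Even closed walks are rare. Fix how often each vertex is visited and let `r x ^ 2` be roughly twice
the number of visits to `x`. A potential with weight `r a * r b / s` on every edge `ab` traversed an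
odd number of times so far then grows by a factor of at most `2 * s` per step, where
`s ^ 2 = ∑ x, r x ^ 2`. Passing to concatenations of walks removes the cost of choosing the visit
counts, and at most `(16 * √(n + ℓ)) ^ ℓ` even closed walks of length `ℓ` start at a given vertex.

If `(n + N) * p ^ 2` is small, the expected number of minimal fillings with fewer than `2 * N` faces
that appear in `Y(n, p)` is therefore `O(n ^ (5 / 2))`, whereas a small sum of squares would force
half of the roughly `n ^ 3 / 6` triangles to have such a filling. -/

open Finset MeasureTheory ProbabilityTheory unitInterval
open scoped symmDiff NNReal

section EvenWalks

variable {V : Type*} [DecidableEq V]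

/-- The edges traversed an odd number of times by the walk that starts at `x` and then visits the
vertices of the list in order. -/
def oddEdges : V → List V → Finset (Sym2 V)
  | _, [] => ∅
  | x, y :: l => {s(x, y)} ∆ oddEdges y l

lemma oddEdges_append (x : V) (l₁ l₂ : List V) :
    oddEdges x (l₁ ++ l₂) = oddEdges x l₁ ∆ oddEdges (l₁.getLastD x) l₂ := by
  induction l₁ generalizing x with
  | nil => exact (bot_symmDiff _).symm
  | cons y l ih => simp only [List.cons_append, oddEdges, ih, symmDiff_assoc, List.getLastD_cons]

/-- The walk from `v` along `l` returns to `v` and traverses every edge an even number of times. -/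
def IsEvenClosedWalk (v : V) (l : List V) : Prop :=
  l.getLastD v = v ∧ oddEdges v l = ∅

lemma IsEvenClosedWalk.nil (v : V) : IsEvenClosedWalk v [] :=
  ⟨rfl, rfl⟩

lemma IsEvenClosedWalk.append {v : V} {l₁ l₂ : List V} (h₁ : IsEvenClosedWalk v l₁)
    (h₂ : IsEvenClosedWalk v l₂) : IsEvenClosedWalk v (l₁ ++ l₂) := by
  refine ⟨?_, by rw [oddEdges_append, h₁.1, h₁.2, h₂.2, symmDiff_self]; rfl⟩
  have hlast := h₁.1
  simp only [List.getLastD_eq_getLast?] at hlast ⊢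
  rw [List.getLast?_append]
  have := h₂.1
  cases h : l₂.getLast? <;> simp_all [List.getLastD_eq_getLast?]

lemma exists_evenClosedWalks_card_eq_pow {v : V} {ℓ : ℕ} {A : Finset (List V)}
    (hA : ∀ l ∈ A, l.length = ℓ ∧ IsEvenClosedWalk v l) (q : ℕ) :
    ∃ B : Finset (List V), #B = #A ^ q ∧ ∀ l ∈ B, l.length = q * ℓ ∧ IsEvenClosedWalk v l := by
  induction q with
  | zero => exact ⟨{[]}, by simp, by simp [IsEvenClosedWalk.nil]⟩
  | succ q ih =>
    obtain ⟨B, hBcard, hB⟩ := ih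
    refine ⟨image₂ (· ++ ·) B A, ?_, ?_⟩
    · rw [card_image₂_iff.2, hBcard, pow_succ]
      rintro ⟨a, b⟩ ⟨ha, -⟩ ⟨a', b'⟩ ⟨ha', -⟩ heq
      exact Prod.ext_iff.2 (List.append_inj heq ((hB a ha).1.trans (hB a' ha').1.symm))
    · rintro _ hl
      obtain ⟨a, ha, b, hb, rfl⟩ := mem_image₂.1 hl
      refine ⟨?_, (hB a ha).2.append (hA b hb).2⟩
      rw [List.length_append, (hB a ha).1, (hA b hb).1, Nat.succ_mul]

variable [Fintype V]

/-- The number of edges of `O` at the vertex `x`. -/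
def edgeDegree (O : Finset (Sym2 V)) (x : V) : ℕ :=
  #{y | s(x, y) ∈ O}

lemma edgeDegree_symmDiff_le (O₁ O₂ : Finset (Sym2 V)) (x : V) :
    edgeDegree (O₁ ∆ O₂) x ≤ edgeDegree O₁ x + edgeDegree O₂ x := by
  refine (card_le_card fun y hy ↦ ?_).trans (card_union_le _ _)
  simp only [mem_filter_univ, mem_symmDiff, mem_union] at hy ⊢
  tauto

lemma edgeDegree_singleton_le (x y z : V) :
    edgeDegree {s(x, y)} z ≤ (if z = x then 1 else 0) + if z = y then 1 else 0 := by
  have hsub : ({w | s(z, w) ∈ ({s(x, y)} : Finset (Sym2 V))} : Finset V) ⊆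
      (if z = x then {y} else ∅) ∪ if z = y then {x} else ∅ := by
    intro w hw
    simp only [mem_filter_univ, mem_singleton, Sym2.eq_iff] at hw
    rcases hw with ⟨rfl, rfl⟩ | ⟨rfl, rfl⟩ <;> simp
  refine (card_le_card hsub).trans ((card_union_le _ _).trans ?_)
  split_ifs <;> simp

lemma edgeDegree_oddEdges_le (x : V) (l : List V) (z : V) :
    edgeDegree (oddEdges x l) z ≤ 2 * l.count z + if z = x then 1 else 0 := by
  induction l generalizing x with
  | nil => simp [oddEdges, edgeDegree]
  | cons y l ih =>
    have hle := (edgeDegree_symmDiff_le {s(x, y)} (oddEdges y l) z).trans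
      (add_le_add (edgeDegree_singleton_le x y z) (ih y))
    have hcount : (y :: l).count z = l.count z + if z = y then 1 else 0 := by
      simp [List.count_cons, @eq_comm _ y z]
    simp only [oddEdges]
    split_ifs at hle hcount ⊢ <;> omega

end EvenWalks

section Counting

lemma card_le_mul_of_card_fiber_le {α β R : Type*} [Semiring R] [PartialOrder R]
    [IsOrderedRing R] [DecidableEq β] {s : Finset α} {t : Finset β} {f : α → β} {c : R}
    (hf : ∀ a ∈ s, f a ∈ t) (hc : ∀ b ∈ t, (#{a ∈ s | f a = b} : R) ≤ c) :
    (#s : R) ≤ #t * c := by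
  rw [card_eq_sum_card_fiberwise hf, Nat.cast_sum, ← nsmul_eq_mul]
  exact sum_le_card_nsmul _ _ _ hc

lemma prod_symmDiff_singleton_le {α : Type*} [DecidableEq α] {c : α → ℝ} (hc : ∀ a, 0 < c a)
    (s : Finset α) (a : α) :
    ∏ b ∈ s ∆ {a}, c b ≤ (∏ b ∈ s, c b) * (c a + if a ∈ s then (c a)⁻¹ else 0) := by
  split_ifs with ha
  · have herase : s ∆ {a} = s.erase a := by grind [mem_symmDiff]
    rw [herase, ← mul_prod_erase s c ha, mul_add]
    have hprod : 0 < ∏ b ∈ s.erase a, c b := prod_pos fun b _ ↦ hc b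
    have := hc a
    calc _ ≤ c a * (∏ b ∈ s.erase a, c b) * c a + ∏ b ∈ s.erase a, c b :=
          le_add_of_nonneg_left (by positivity)
      _ = _ := by field_simp
  · have hinsert : s ∆ {a} = insert a s := by grind [mem_symmDiff]
    rw [hinsert, prod_insert ha, add_zero, mul_comm]

end Counting

section CountingWalks

variable {V : Type*}

/-- The weight `∏ r a * r b / s` over the edges `ab` of `O`: the potential that controls the number
of walks whose set of oddly traversed edges is `O`. -/
noncomputable def edgeWeight (r : V → ℝ) (s : ℝ) (O : Finset (Sym2 V)) : ℝ :=
  ∏ e ∈ O, (e.map r).mul / s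

lemma mul_sym2Map_div_pos {r : V → ℝ} {s : ℝ} (hr : ∀ x, 0 < r x) (hs : 0 < s) (e : Sym2 V) :
    0 < (e.map r).mul / s := by
  induction e with
  | _ a b => exact div_pos (mul_pos (hr a) (hr b)) hs

lemma edgeWeight_pos {r : V → ℝ} {s : ℝ} (hr : ∀ x, 0 < r x) (hs : 0 < s) (O : Finset (Sym2 V)) :
    0 < edgeWeight r s O :=
  prod_pos fun e _ ↦ mul_sym2Map_div_pos hr hs e

variable [Fintype V]

lemma card_le_sum_card_preimage_cons {A : Finset (List V)} (hA : ∀ l ∈ A, l ≠ []) :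
    #A ≤ ∑ y, #(A.preimage (List.cons y) List.cons_injective.injOn) := by
  classical
  have hsub : A ⊆ univ.biUnion fun y ↦
      (A.preimage (List.cons y) List.cons_injective.injOn).image (List.cons y) := by
    intro l hl
    obtain ⟨y, l, rfl⟩ := List.exists_cons_of_ne_nil (hA l hl)
    simpa using hl
  exact (card_le_card hsub).trans (card_biUnion_le.trans (sum_le_sum fun y _ ↦ card_image_le))

variable [DecidableEq V]

/-- The two terms of the factor `2` come from the steps along new edges and from those along the
edges of `O`. -/
lemma sum_edgeWeight_step_le {r : V → ℝ} {s : ℝ} (hr : ∀ x, 0 < r x) (hs : 0 < s)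
    (hsum : ∑ x, r x ^ 2 ≤ s ^ 2) {O : Finset (Sym2 V)} {x : V}
    (hdeg : (edgeDegree O x : ℝ) ≤ r x ^ 2) :
    ∑ y, edgeWeight r s ({s(x, y)} ∆ O) * r y ≤ 2 * s * (edgeWeight r s O * r x) := by
  have hx := hr x
  have hO := edgeWeight_pos hr hs O
  calc ∑ y, edgeWeight r s ({s(x, y)} ∆ O) * r y
      ≤ ∑ y, edgeWeight r s O *
          (r x * r y / s + if s(x, y) ∈ O then (r x * r y / s)⁻¹ else 0) * r y := by
        refine sum_le_sum fun y _ ↦ mul_le_mul_of_nonneg_right ?_ (hr y).le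
        rw [symmDiff_comm]
        exact prod_symmDiff_singleton_le (mul_sym2Map_div_pos hr hs) O s(x, y)
    _ = ∑ y, (edgeWeight r s O * r x / s * r y ^ 2 +
          if s(x, y) ∈ O then edgeWeight r s O * s / r x else 0) := by
        refine sum_congr rfl fun y _ ↦ ?_
        have := hr y
        split_ifs <;> field_simp
        ring
    _ = edgeWeight r s O * r x / s * ∑ y, r y ^ 2 +
          edgeDegree O x * (edgeWeight r s O * s / r x) := by
        rw [sum_add_distrib, ← mul_sum, ← sum_filter, sum_const, nsmul_eq_mul]
        rfl
    _ ≤ edgeWeight r s O * r x / s * s ^ 2 + r x ^ 2 * (edgeWeight r s O * s / r x) := by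
        gcongr
    _ = 2 * s * (edgeWeight r s O * r x) := by
        field_simp
        ring

lemma sum_pow_mul_edgeWeight_step_le {r : V → ℝ} {s : ℝ} (hr : ∀ x, 0 < r x) (hs : 0 < s)
    (hsum : ∑ x, r x ^ 2 ≤ s ^ 2) (v : V) (ℓ : ℕ) {O : Finset (Sym2 V)} {x : V}
    (hdeg : (edgeDegree O x : ℝ) ≤ r x ^ 2) :
    ∑ y, (2 * s) ^ ℓ * edgeWeight r s ({s(x, y)} ∆ O) * (r y / r v) ≤
      (2 * s) ^ (ℓ + 1) * edgeWeight r s O * (r x / r v) := by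
  have hv := hr v
  calc ∑ y, (2 * s) ^ ℓ * edgeWeight r s ({s(x, y)} ∆ O) * (r y / r v)
      = (2 * s) ^ ℓ / r v * ∑ y, edgeWeight r s ({s(x, y)} ∆ O) * r y := by
        rw [mul_sum]
        exact sum_congr rfl fun y _ ↦ by ring
    _ ≤ (2 * s) ^ ℓ / r v * (2 * s * (edgeWeight r s O * r x)) := by
        gcongr
        exact sum_edgeWeight_step_le hr hs hsum hdeg
    _ = (2 * s) ^ (ℓ + 1) * edgeWeight r s O * (r x / r v) := by ring

/-- The bound on the number of visits to `z` makes `r z ^ 2` a bound on the degree of `z` in the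
set of odd edges, as `sum_edgeWeight_step_le` requires. -/
lemma card_walks_le_edgeWeight {r : V → ℝ} {s : ℝ} (hr : ∀ x, 0 < r x) (hs : 0 < s)
    (hsum : ∑ x, r x ^ 2 ≤ s ^ 2) {v x : V} {ℓ : ℕ} {O : Finset (Sym2 V)} {A : Finset (List V)}
    (hA : ∀ l ∈ A, l.length = ℓ ∧ l.getLastD x = v ∧ oddEdges x l = O ∧
      ∀ z, 2 * (l.count z : ℝ) + 1 ≤ r z ^ 2) :
    (#A : ℝ) ≤ (2 * s) ^ ℓ * edgeWeight r s O * (r x / r v) := by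
  have hv := hr v
  have hbound (ℓ : ℕ) (x : V) (O : Finset (Sym2 V)) :
      0 ≤ (2 * s) ^ ℓ * edgeWeight r s O * (r x / r v) := by
    have hx := hr x
    have hO := edgeWeight_pos hr hs O
    positivity
  induction ℓ generalizing x O A with
  | zero =>
    have hnil : A ⊆ {[]} := fun l hl ↦ mem_singleton.2 (List.length_eq_zero_iff.1 (hA l hl).1)
    obtain rfl | rfl := subset_singleton_iff.1 hnil
    · simpa using hbound 0 x O
    · obtain ⟨-, hlast, rfl, -⟩ := hA [] (mem_singleton_self [])
      obtain rfl : x = v := hlast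
      simp [edgeWeight, oddEdges, hv.ne']
  | succ ℓ ih =>
    obtain rfl | ⟨l₀, hl₀⟩ := A.eq_empty_or_nonempty
    · simpa using hbound (ℓ + 1) x O
    have hdeg : (edgeDegree O x : ℝ) ≤ r x ^ 2 := by
      obtain ⟨-, -, rfl, hcount⟩ := hA l₀ hl₀
      refine le_trans ?_ (hcount x)
      simpa using (Nat.cast_le (α := ℝ)).2 (edgeDegree_oddEdges_le x l₀ x)
    have htail (y : V) : (#(A.preimage (List.cons y) List.cons_injective.injOn) : ℝ) ≤
        (2 * s) ^ ℓ * edgeWeight r s ({s(x, y)} ∆ O) * (r y / r v) := by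
      refine ih fun l hl ↦ ?_
      obtain ⟨hlen, hlast, hodd, hcount⟩ := hA _ (mem_preimage.1 hl)
      refine ⟨Nat.succ_injective hlen, by rwa [List.getLastD_cons] at hlast, ?_, fun z ↦ ?_⟩
      · rw [← hodd, oddEdges, symmDiff_symmDiff_cancel_left]
      · refine le_trans ?_ (hcount z)
        gcongr
        exact List.count_le_count_cons
    have hne : ∀ l ∈ A, l ≠ [] := by
      rintro _ hl rfl
      simpa using (hA _ hl).1
    calc (#A : ℝ) ≤ ∑ y, (2 * s) ^ ℓ * edgeWeight r s ({s(x, y)} ∆ O) * (r y / r v) := by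
          refine le_trans ?_ (sum_le_sum fun y _ ↦ htail y)
          exact_mod_cast card_le_sum_card_preimage_cons hne
      _ ≤ (2 * s) ^ (ℓ + 1) * edgeWeight r s O * (r x / r v) :=
          sum_pow_mul_edgeWeight_step_le hr hs hsum v ℓ hdeg

lemma card_evenClosedWalks_le_of_coe_eq {v : V} {P : Multiset V} {A : Finset (List V)}
    (hA : ∀ l ∈ A, IsEvenClosedWalk v l ∧ (l : Multiset V) = P) :
    (#A : ℝ) ≤ (2 * √(2 * P.card + Fintype.card V)) ^ P.card := by
  have hV : 0 < Fintype.card V := Fintype.card_pos_iff.2 ⟨v⟩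
  have hsq (x : V) : √(2 * P.count x + 1 : ℝ) ^ 2 = 2 * P.count x + 1 :=
    Real.sq_sqrt (by positivity)
  have hle := card_walks_le_edgeWeight (r := fun x ↦ √(2 * P.count x + 1))
    (s := √(2 * P.card + Fintype.card V)) (v := v) (x := v) (ℓ := P.card) (O := ∅) (A := A)
    (fun x ↦ by positivity) (by positivity) ?_ ?_
  · have hv : √(2 * P.count v + 1 : ℝ) ≠ 0 := by positivity
    simpa [edgeWeight, hv] using hle
  · have hcard : ∑ x, P.count x = P.card := Multiset.sum_count_eq_card fun a _ ↦ mem_univ a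
    simp only [hsq, sum_add_distrib, ← mul_sum, ← Nat.cast_sum, hcard]
    rw [Real.sq_sqrt (by positivity)]
    simp
  · rintro l hl
    obtain ⟨⟨hlast, hodd⟩, rfl⟩ := hA l hl
    exact ⟨rfl, hlast, hodd, fun z ↦ by rw [hsq, Multiset.coe_count]⟩

lemma card_evenClosedWalks_le_two_pow_mul {v : V} {ℓ : ℕ} {A : Finset (List V)}
    (hA : ∀ l ∈ A, l.length = ℓ ∧ IsEvenClosedWalk v l) :
    (#A : ℝ) ≤ 2 ^ (Fintype.card V + ℓ) * (2 * √(2 * ℓ + Fintype.card V)) ^ ℓ := by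
  have hprofiles : (#((univ : Finset (Sym V ℓ)).image Sym.toMultiset) : ℝ) ≤
      2 ^ (Fintype.card V + ℓ) := by
    have hcard : #((univ : Finset (Sym V ℓ)).image Sym.toMultiset) ≤ _ := card_image_le
    rw [card_univ, Sym.card_sym_eq_choose] at hcard
    exact_mod_cast hcard.trans
      ((Nat.choose_le_two_pow _ _).trans (Nat.pow_le_pow_right two_pos (Nat.sub_le _ _)))
  refine (card_le_mul_of_card_fiber_le (s := A) (f := fun l ↦ (l : Multiset V))
    (c := (2 * √(2 * ℓ + Fintype.card V)) ^ ℓ) (fun l hl ↦ ?_) fun P hP ↦ ?_).trans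
    (mul_le_mul_of_nonneg_right hprofiles (by positivity))
  · exact mem_image.2 ⟨⟨l, (hA l hl).1⟩, mem_univ _, rfl⟩
  · obtain ⟨⟨P, rfl⟩, -, rfl⟩ := mem_image.1 hP
    refine card_evenClosedWalks_le_of_coe_eq (v := v) fun l hl ↦ ?_
    rw [mem_filter] at hl
    exact ⟨(hA l hl.1).2, hl.2⟩

/-- Concatenating `q` walks replaces `ℓ` by `q * ℓ`, which can be chosen comparable to
`card V + ℓ`; this absorbs the factor `2 ^ card V` lost to the choice of the visit counts. -/
theorem card_evenClosedWalks_le {v : V} {ℓ : ℕ} (hℓ : 0 < ℓ) {A : Finset (List V)}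
    (hA : ∀ l ∈ A, l.length = ℓ ∧ IsEvenClosedWalk v l) :
    (#A : ℝ) ≤ (16 * √(Fintype.card V + ℓ)) ^ ℓ := by
  set n := Fintype.card V
  obtain ⟨q, hq, hlower, hupper⟩ : ∃ q, q ≠ 0 ∧ n ≤ q * ℓ ∧ q * ℓ ≤ n + ℓ := by
    refine ⟨n / ℓ + 1, Nat.succ_ne_zero _, ?_, ?_⟩
    · rw [mul_comm]
      exact (Nat.lt_mul_div_succ n hℓ).le
    · rw [Nat.succ_mul]
      exact Nat.add_le_add_right (Nat.div_mul_le_self n ℓ) ℓ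
  obtain ⟨B, hBcard, hB⟩ := exists_evenClosedWalks_card_eq_pow hA q
  have hlower' : (n : ℝ) ≤ (q * ℓ : ℕ) := by exact_mod_cast hlower
  have hupper' : ((q * ℓ : ℕ) : ℝ) ≤ n + ℓ := by exact_mod_cast hupper
  have hsqrt : √(2 * (q * ℓ : ℕ) + n : ℝ) ≤ 2 * √(n + ℓ) :=
    calc √(2 * (q * ℓ : ℕ) + n : ℝ) ≤ √(2 ^ 2 * (n + ℓ)) :=
          Real.sqrt_le_sqrt (by linarith [hlower', hupper'])
      _ = 2 * √(n + ℓ) := by rw [Real.sqrt_mul (by positivity), Real.sqrt_sq two_pos.le]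
  refine le_of_pow_le_pow_left₀ hq (by positivity) ?_
  calc (#A : ℝ) ^ q = #B := by rw [hBcard, Nat.cast_pow]
    _ ≤ 2 ^ (n + q * ℓ) * (2 * √(2 * (q * ℓ : ℕ) + n)) ^ (q * ℓ) :=
        card_evenClosedWalks_le_two_pow_mul hB
    _ ≤ 2 ^ (q * ℓ + q * ℓ) * (2 * (2 * √(n + ℓ))) ^ (q * ℓ) := by
        gcongr
        norm_num
    _ = ((16 * √(n + ℓ)) ^ ℓ) ^ q := by
        rw [pow_add, ← mul_pow, ← mul_pow, ← pow_mul, mul_comm ℓ q]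
        ring

end CountingWalks

section Trees

variable {α β : Type*}

/-- The labels of a binary tree, each node listed between its left and its right subtree. -/
def inorder : BinaryTree α → List α
  | .nil => []
  | .node x L R => inorder L ++ x :: inorder R

lemma length_inorder (T : BinaryTree α) : (inorder T).length = T.numNodes := by
  induction T with
  | nil => rfl
  | node x L R ihL ihR =>
    simp only [inorder, List.length_append, List.length_cons, ihL, ihR, BinaryTree.numNodes]
    ring

lemma numNodes_map (f : α → β) (T : BinaryTree α) : (T.map f).numNodes = T.numNodes := by
  induction T with
  | nil => rfl
  | node x L R ihL ihR => simp only [BinaryTree.map, BinaryTree.numNodes, ihL, ihR]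

lemma tree_eq_of_shape_eq_of_inorder_eq {T T' : BinaryTree α}
    (hshape : T.map (fun _ ↦ ()) = T'.map (fun _ ↦ ())) (h : inorder T = inorder T') : T = T' := by
  induction T generalizing T' with
  | nil => cases T' with
    | nil => rfl
    | node => cases hshape
  | node x L R ihL ihR => cases T' with
    | nil => cases hshape
    | node x' L' R' =>
      obtain ⟨-, hL, hR⟩ := BinaryTree.node.inj hshape
      have hlen : (inorder L).length = (inorder L').length := by
        simpa only [length_inorder, numNodes_map] using congrArg BinaryTree.numNodes hL
      obtain ⟨hL', hcons⟩ := List.append_inj h hlen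
      obtain ⟨rfl, hR'⟩ := List.cons.inj hcons
      rw [ihL hL hL', ihR hR hR']

lemma card_treesOfNumNodesEq_le (k : ℕ) : #(BinaryTree.treesOfNumNodesEq k) ≤ 4 ^ k := by
  rw [BinaryTree.treesOfNumNodesEq_card_eq_catalan, catalan_eq_centralBinom_div]
  exact (Nat.div_le_self _ _).trans (Nat.centralBinom_le_four_pow k)

end Trees

section Fillings

variable {V : Type*} [DecidableEq V]

/-- The edges of the face `t`. -/
def faceEdges (t : Finset V) : Finset (Sym2 V) :=
  {e ∈ t.sym2 | ¬ e.IsDiag}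

lemma mk_mem_faceEdges {t : Finset V} {a b : V} :
    s(a, b) ∈ faceEdges t ↔ a ∈ t ∧ b ∈ t ∧ a ≠ b := by
  simp [faceEdges, and_assoc]

lemma faceEdges_eq_symmDiff {a b c : V} (hab : a ≠ b) (hac : a ≠ c) (hbc : b ≠ c) :
    faceEdges {a, b, c} = {s(a, b)} ∆ ({s(a, c)} ∆ {s(c, b)}) := by
  ext e
  induction e with
  | _ x y =>
    simp only [mk_mem_faceEdges, mem_symmDiff, mem_singleton, mem_insert, Sym2.eq_iff]
    grind

lemma exists_eq_insert_of_mem_faceEdges {t : Finset V} (ht : #t = 3) {a b : V}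
    (h : s(a, b) ∈ faceEdges t) : ∃ c, t = {a, b, c} ∧ a ≠ b ∧ a ≠ c ∧ b ≠ c := by
  obtain ⟨ha, hb, hab⟩ := mk_mem_faceEdges.1 h
  have hb' : b ∈ t.erase a := mem_erase.2 ⟨hab.symm, hb⟩
  obtain ⟨c, hc⟩ : ∃ c, (t.erase a).erase b = {c} :=
    card_eq_one.1 (by rw [card_erase_of_mem hb', card_erase_of_mem ha, ht])
  have hc' : c ∈ (t.erase a).erase b := hc ▸ mem_singleton_self c
  simp only [mem_erase] at hc'
  exact ⟨c, by rw [← hc, insert_erase hb', insert_erase ha], hab, hc'.2.1.symm, hc'.1.symm⟩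

/-- The faces of the disc built by gluing a triangle `{u, v, w}` to the edge `uv`, where `w` is the
root of the tree, and recursively the discs of the two subtrees to its sides `uw` and `wv`. -/
def treeFaces : V → BinaryTree V → V → Multiset (Finset V)
  | _, .nil, _ => 0
  | u, .node w L R, v => {u, v, w} ::ₘ (treeFaces u L w + treeFaces w R v)

lemma card_treeFaces (u : V) (T : BinaryTree V) (v : V) :
    (treeFaces u T v).card = T.numNodes := by
  induction T generalizing u v with
  | nil => rfl
  | node w L R ihL ihR =>
    simp only [treeFaces, Multiset.card_cons, Multiset.card_add, ihL, ihR, BinaryTree.numNodes]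

/-- The free edges, modulo 2, of the disc `treeFaces u T v`: reading its free side from `u` to `v`
visits the labels of `T` in order. -/
def treeBoundary (u : V) (T : BinaryTree V) (v : V) : Finset (Sym2 V) :=
  oddEdges u (inorder T ++ [v])

lemma treeBoundary_nil (u v : V) : treeBoundary u .nil v = {s(u, v)} :=
  symmDiff_bot _

lemma treeBoundary_node (u v w : V) (L R : BinaryTree V) :
    treeBoundary u (.node w L R) v = treeBoundary u L w ∆ treeBoundary w R v := by
  have hwalk : inorder (.node w L R) ++ [v] = (inorder L ++ [w]) ++ (inorder R ++ [v]) := by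
    simp [inorder]
  rw [treeBoundary, hwalk, oddEdges_append, List.getLastD_concat]
  rfl

lemma exists_treeFaces_eq_cons {t : Finset V} (ht : #t = 3) {e : Sym2 V} (het : e ∈ faceEdges t)
    {u : V} {T : BinaryTree V} {v : V} (he : e ∈ treeBoundary u T v) :
    ∃ T', treeFaces u T' v = t ::ₘ treeFaces u T v ∧
      treeBoundary u T' v = faceEdges t ∆ treeBoundary u T v := by
  induction T generalizing u v with
  | nil =>
    rw [treeBoundary_nil, mem_singleton] at he
    subst he
    obtain ⟨w, rfl, huv, huw, hvw⟩ := exists_eq_insert_of_mem_faceEdges ht het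
    refine ⟨.node w .nil .nil, rfl, ?_⟩
    simp only [treeBoundary_node, treeBoundary_nil, faceEdges_eq_symmDiff huv huw hvw]
    rw [symmDiff_comm {s(u, v)}, symmDiff_symmDiff_cancel_right]
  | node w L R ihL ihR =>
    rw [treeBoundary_node, mem_symmDiff] at he
    obtain ⟨he, -⟩ | ⟨he, -⟩ := he
    · obtain ⟨L', hfaces, hboundary⟩ := ihL he
      refine ⟨.node w L' R, ?_, ?_⟩
      · rw [treeFaces, treeFaces, hfaces, Multiset.cons_add, Multiset.cons_swap]
      · rw [treeBoundary_node, treeBoundary_node, hboundary, symmDiff_assoc]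
    · obtain ⟨R', hfaces, hboundary⟩ := ihR he
      refine ⟨.node w L R', ?_, ?_⟩
      · rw [treeFaces, treeFaces, hfaces, Multiset.add_cons, Multiset.cons_swap]
      · rw [treeBoundary_node, treeBoundary_node, hboundary, symmDiff_left_comm]

/-- The walk along the inorder labels of `T`, from `a` back to `a`, bounds the three discs that
`T` hangs on the sides of the triangle `τ`; together these discs have exactly the faces `y`.
The root of `T` and that of its right subtree are the other two vertices of `τ`. -/
def Unfolds (a : V) (T : BinaryTree V) (τ : Finset V) (y : Finset (Finset V)) : Prop :=
  ∃ b c L₁ L₂ L₃, T = .node b L₁ (.node c L₂ L₃) ∧ τ = {a, b, c} ∧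
    treeFaces a L₁ b + (treeFaces b L₂ c + treeFaces c L₃ a) = y.val

lemma Unfolds.unique {a : V} {T : BinaryTree V} {τ τ' : Finset V} {y y' : Finset (Finset V)}
    (h : Unfolds a T τ y) (h' : Unfolds a T τ' y') : τ = τ' ∧ y = y' := by
  obtain ⟨b, c, L₁, L₂, L₃, rfl, rfl, hy⟩ := h
  obtain ⟨_, _, _, _, _, hroot, rfl, hy'⟩ := h'
  obtain ⟨rfl, rfl, hright⟩ := BinaryTree.node.inj hroot
  obtain ⟨rfl, rfl, rfl⟩ := BinaryTree.node.inj hright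
  exact ⟨rfl, val_injective (hy.symm.trans hy')⟩

lemma Unfolds.eq_of_shape_eq_of_inorder_eq {a : V} {T T' : BinaryTree V} {τ τ' : Finset V}
    {y y' : Finset (Finset V)} (h : Unfolds a T τ y) (h' : Unfolds a T' τ' y')
    (hshape : T.map (fun _ ↦ ()) = T'.map fun _ ↦ ()) (hinorder : inorder T = inorder T') :
    τ = τ' ∧ y = y' := by
  obtain rfl := tree_eq_of_shape_eq_of_inorder_eq hshape hinorder
  exact h.unique h'

lemma Unfolds.numNodes_eq {a : V} {T : BinaryTree V} {τ : Finset V} {y : Finset (Finset V)}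
    (h : Unfolds a T τ y) : T.numNodes = #y + 2 := by
  obtain ⟨b, c, L₁, L₂, L₃, rfl, rfl, hy⟩ := h
  rw [card_def, ← hy]
  simp only [Multiset.card_add, card_treeFaces, BinaryTree.numNodes]
  ring

lemma Unfolds.exists_insert {a : V} {T : BinaryTree V} {τ : Finset V} {y : Finset (Finset V)}
    (h : Unfolds a T τ y) {t : Finset V} (ht : #t = 3) (hty : t ∉ y) {e : Sym2 V}
    (het : e ∈ faceEdges t) (he : e ∈ treeBoundary a T a) :
    ∃ T', Unfolds a T' τ (insert t y) ∧ treeBoundary a T' a = faceEdges t ∆ treeBoundary a T a := by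
  obtain ⟨b, c, L₁, L₂, L₃, rfl, rfl, hy⟩ := h
  simp only [treeBoundary_node, mem_symmDiff] at he
  have hval : (insert t y).val = t ::ₘ y.val := insert_val_of_notMem hty
  obtain ⟨he, -⟩ | ⟨⟨he, -⟩ | ⟨he, -⟩, -⟩ := he <;>
    obtain ⟨L', hfaces, hboundary⟩ := exists_treeFaces_eq_cons ht het he
  · refine ⟨_, ⟨b, c, L', L₂, L₃, rfl, rfl, ?_⟩, ?_⟩
    · rw [hval, ← hy, hfaces, Multiset.cons_add]
    · simp only [treeBoundary_node, hboundary, symmDiff_assoc]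
  · refine ⟨_, ⟨b, c, L₁, L', L₃, rfl, rfl, ?_⟩, ?_⟩
    · rw [hval, ← hy, hfaces, Multiset.cons_add, Multiset.add_cons]
    · simp only [treeBoundary_node, hboundary, symmDiff_assoc, symmDiff_left_comm (faceEdges t)]
  · refine ⟨_, ⟨b, c, L₁, L₂, L', rfl, rfl, ?_⟩, ?_⟩
    · rw [hval, ← hy, hfaces, Multiset.add_cons, Multiset.add_cons]
    · simp only [treeBoundary_node, hboundary, symmDiff_left_comm (faceEdges t)]

lemma exists_unfolds_empty {τ : Finset V} (hτ : #τ = 3) :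
    ∃ a T, Unfolds a T τ ∅ ∧ treeBoundary a T a = faceEdges τ := by
  obtain ⟨a, b, c, hab, hac, hbc, rfl⟩ := card_eq_three.1 hτ
  refine ⟨a, .node b .nil (.node c .nil .nil), ⟨b, c, _, _, _, rfl, rfl, rfl⟩, ?_⟩
  simp only [treeBoundary_node, treeBoundary_nil, faceEdges_eq_symmDiff hab hac hbc]
  rw [symmDiff_comm {s(a, c)}, Sym2.eq_swap (a := b), Sym2.eq_swap (a := a) (b := c)]

variable [Fintype V]

/-- The edges lying in an odd number of the faces `y`. -/
def chainBoundary (y : Finset (Finset V)) : Finset (Sym2 V) :=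
  {e | Odd #{t ∈ y | e ∈ faceEdges t}}

lemma chainBoundary_empty : chainBoundary (∅ : Finset (Finset V)) = ∅ := by
  simp [chainBoundary]

lemma chainBoundary_insert {t : Finset V} {y : Finset (Finset V)} (ht : t ∉ y) :
    chainBoundary (insert t y) = faceEdges t ∆ chainBoundary y := by
  ext e
  simp only [chainBoundary, mem_filter_univ, filter_insert, mem_symmDiff]
  split_ifs with he
  · simp [card_insert_of_notMem, ht, he, Nat.odd_add_one]
  · simp [he]

lemma exists_mem_sdiff_of_mem_symmDiff_chainBoundary {y y' : Finset (Finset V)} (hsub : y' ⊆ y)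
    {e : Sym2 V} (he : e ∈ chainBoundary y ∆ chainBoundary y') :
    ∃ t ∈ y \ y', e ∈ faceEdges t := by
  by_contra! hnot
  have hfilter : {t ∈ y | e ∈ faceEdges t} = {t ∈ y' | e ∈ faceEdges t} := by
    ext t
    have := hnot t
    have := @hsub t
    simp only [mem_sdiff, mem_filter] at *
    tauto
  simp only [chainBoundary, mem_symmDiff, mem_filter_univ, hfilter] at he
  tauto

/-- `y` is a set of 2-dimensional faces whose mod 2 boundary is that of the triangle `τ`. -/
structure Fills (τ : Finset V) (y : Finset (Finset V)) : Prop where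
  card_eq_three : ∀ t ∈ y, #t = 3
  chainBoundary_eq : chainBoundary y = faceEdges τ

/-- A largest subset of `y` that unfolds with boundary `∂τ - ∂y'` fills `τ`, since otherwise some
face of `y` could still be glued to it; so it is `y` by minimality. -/
lemma exists_unfolds_of_minimal {τ : Finset V} (hτ : #τ = 3) {y : Finset (Finset V)}
    (hy : Minimal (Fills τ) y) : ∃ a T, Unfolds a T τ y ∧ treeBoundary a T a = ∅ := by
  obtain ⟨a, T₀, hT₀, hbdry₀⟩ := exists_unfolds_empty hτ
  let P (y' : Finset (Finset V)) : Prop := y' ⊆ y ∧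
    ∃ T, Unfolds a T τ y' ∧ treeBoundary a T a = faceEdges τ ∆ chainBoundary y'
  have hP₀ : P ∅ := by
    refine ⟨empty_subset y, T₀, hT₀, ?_⟩
    rw [hbdry₀, chainBoundary_empty]
    exact (symmDiff_bot _).symm
  obtain ⟨y', -, hmax⟩ := (Set.toFinite {y' | P y'}).exists_le_maximal hP₀
  obtain ⟨hsub, T, hT, hbdry⟩ := hmax.prop
  suffices hfill : chainBoundary y' = faceEdges τ by
    obtain rfl : y' = y := hsub.antisymm <|
      hy.le_of_le ⟨fun t ht ↦ hy.prop.card_eq_three t (hsub ht), hfill⟩ hsub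
    exact ⟨a, T, hT, by rw [hbdry, hfill, symmDiff_self]; rfl⟩
  by_contra hne
  obtain ⟨e, he⟩ : (faceEdges τ ∆ chainBoundary y').Nonempty := by
    rw [nonempty_iff_ne_empty]
    exact fun h ↦ hne (symmDiff_eq_bot.1 h).symm
  obtain ⟨t, ht, het⟩ := exists_mem_sdiff_of_mem_symmDiff_chainBoundary hsub
    (hy.prop.chainBoundary_eq ▸ he)
  obtain ⟨hty, hty'⟩ := mem_sdiff.1 ht
  obtain ⟨T', hT', hbdry'⟩ :=
    hT.exists_insert (hy.prop.card_eq_three t hty) hty' het (hbdry ▸ he)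
  have hPt : P (insert t y') := by
    refine ⟨insert_subset hty hsub, T', hT', ?_⟩
    rw [hbdry', hbdry, chainBoundary_insert hty', symmDiff_left_comm]
  exact hty' (hmax.le_of_ge hPt (subset_insert t y') (mem_insert_self t y'))

theorem card_minimal_fillings_le {m : ℕ} {G : Finset (Finset V × Finset (Finset V))}
    (hG : ∀ g ∈ G, #g.1 = 3 ∧ Minimal (Fills g.1) g.2 ∧ #g.2 = m) :
    (#G : ℝ) ≤ Fintype.card V * 4 ^ (m + 2) *
      (16 * √(Fintype.card V + (m + 3 : ℕ))) ^ (m + 3) := by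
  obtain rfl | ⟨g₀, hg₀⟩ := G.eq_empty_or_nonempty
  · simpa using by positivity
  have : Nonempty V := ⟨(exists_unfolds_of_minimal (hG g₀ hg₀).1 (hG g₀ hg₀).2.1).choose⟩
  choose! start tree hunfolds hclosed using fun g (hg : g ∈ G) ↦
    exists_unfolds_of_minimal (hG g hg).1 (hG g hg).2.1
  have hnodes (g) (hg : g ∈ G) : (tree g).numNodes = m + 2 := by
    rw [(hunfolds g hg).numNodes_eq, (hG g hg).2.2]
  have hcodes : (#((univ : Finset V) ×ˢ BinaryTree.treesOfNumNodesEq (m + 2)) : ℝ) ≤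
      Fintype.card V * 4 ^ (m + 2) := by
    rw [card_product, card_univ]
    exact_mod_cast Nat.mul_le_mul_left _ (card_treesOfNumNodesEq_le _)
  refine (card_le_mul_of_card_fiber_le (s := G)
    (c := (16 * √(Fintype.card V + (m + 3 : ℕ))) ^ (m + 3))
    (f := fun g ↦ (start g, (tree g).map fun _ ↦ ())) (fun g hg ↦ ?_) fun ⟨a, S⟩ _ ↦ ?_).trans
    (mul_le_mul_of_nonneg_right hcodes (by positivity))
  · rw [mem_product, BinaryTree.mem_treesOfNumNodesEq, numNodes_map]
    exact ⟨mem_univ _, hnodes g hg⟩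
  · set F := {g ∈ G | (start g, (tree g).map fun _ ↦ ()) = (a, S)} with hF
    have hmem (g) (hg : g ∈ F) : g ∈ G ∧ start g = a ∧ (tree g).map (fun _ ↦ ()) = S := by
      simpa [hF] using hg
    have hinj : Set.InjOn (fun g ↦ inorder (tree g) ++ [a]) F := by
      intro g hg g' hg' heq
      obtain ⟨hgG, rfl, hshape⟩ := hmem g hg
      obtain ⟨hgG', hstart', hshape'⟩ := hmem g' hg'
      exact Prod.ext_iff.2 <| (hunfolds g hgG).eq_of_shape_eq_of_inorder_eq
        (hstart' ▸ hunfolds g' hgG') (hshape.trans hshape'.symm) (List.append_cancel_right heq)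
    rw [← card_image_of_injOn hinj]
    refine card_evenClosedWalks_le (v := a) (Nat.succ_pos _) fun l hl ↦ ?_
    obtain ⟨g, hg, rfl⟩ := mem_image.1 hl
    obtain ⟨hgG, rfl, -⟩ := hmem g hg
    refine ⟨?_, List.getLastD_concat, hclosed g hgG⟩
    simp [length_inorder, hnodes g hgG]

end Fillings

section Probability

lemma mul_measure_le_sum_of_le_card {Ω ι : Type*} [MeasurableSpace Ω] (μ : Measure Ω)
    (s : Finset ι) {A : ι → Set Ω} (hA : ∀ i ∈ s, MeasurableSet (A i)) {B : Set Ω} {k : ℝ≥0∞}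
    (hB : ∀ ω ∈ B, ∃ s' ⊆ s, k ≤ #s' ∧ ∀ i ∈ s', ω ∈ A i) :
    k * μ B ≤ ∑ i ∈ s, μ (A i) := by
  have hle (ω) (hω : ω ∈ B) : k ≤ ∑ i ∈ s, (A i).indicator 1 ω := by
    obtain ⟨s', hsub, hk, hs'⟩ := hB ω hω
    calc k ≤ ∑ i ∈ s', (A i).indicator 1 ω := by
          rw [sum_congr rfl fun i hi ↦ Set.indicator_of_mem (hs' i hi) 1]
          simpa using hk
      _ ≤ ∑ i ∈ s, (A i).indicator 1 ω := sum_le_sum_of_subset hsub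
  have hmeas (i) (hi : i ∈ s) : Measurable ((A i).indicator (1 : Ω → ℝ≥0∞)) :=
    measurable_one.indicator (hA i hi)
  calc k * μ B ≤ k * μ {ω | k ≤ ∑ i ∈ s, (A i).indicator 1 ω} := by gcongr; exact hle
    _ ≤ ∫⁻ ω, ∑ i ∈ s, (A i).indicator 1 ω ∂μ :=
        mul_meas_ge_le_lintegral (measurable_fun_sum s hmeas) k
    _ = ∑ i ∈ s, μ (A i) := by
        rw [lintegral_finsetSum s hmeas]
        exact sum_congr rfl fun i hi ↦ lintegral_indicator_one (hA i hi)

lemma bernoulliMeasure_true_false_singleton (p : I) (b : Bool) :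
    Ber(true, false, p) {b} = if b then (toNNReal p : ℝ≥0∞) else 1 - toNNReal p := by
  cases b
  · rw [bernoulliMeasure_apply_of_notMem_of_mem _ .of_discrete (by simp) (by simp)]
    refine ENNReal.eq_sub_of_add_eq ENNReal.coe_ne_top ?_
    exact_mod_cast toNNReal_symm_add_toNNReal p
  · exact bernoulliMeasure_apply_of_mem_of_notMem _ .of_discrete (by simp) (by simp)

variable {n : ℕ}

lemma lmProb_eq_pi (p : I) (E : Set (Tri n → Bool)) :
    lmProb n (toNNReal p) E = Measure.pi (fun _ ↦ Ber(true, false, p)) E := by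
  rw [← Measure.tsum_indicator_apply_singleton _ E .of_discrete, lmProb,
    tsum_subtype E fun ω ↦ ∏ t, if ω t then (toNNReal p : ℝ≥0∞) else 1 - toNNReal p]
  congr! with ω
  rw [Measure.pi_singleton]
  exact prod_congr rfl fun t _ ↦ (bernoulliMeasure_true_false_singleton p _).symm

lemma lmProb_compl (p : I) (E : Set (Tri n → Bool)) :
    lmProb n (toNNReal p) Eᶜ = 1 - lmProb n (toNNReal p) E := by
  rw [lmProb_eq_pi, lmProb_eq_pi, prob_compl_eq_one_sub .of_discrete]

/-- The set of faces of the complex `ω`. -/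
def faces (ω : Tri n → Bool) : Finset (Finset (Fin n)) :=
  {t : Tri n | ω t}.toFinset.map (.subtype _)

lemma mem_faces {ω : Tri n → Bool} {t : Finset (Fin n)} :
    t ∈ faces ω ↔ ∃ h : #t = 3, ω ⟨t, h⟩ := by
  simp [faces]

lemma lmProb_subset_faces (p : I) {y : Finset (Finset (Fin n))}
    (hy : ∀ t ∈ y, #t = 3) : lmProb n (toNNReal p) {ω | y ⊆ faces ω} = toNNReal p ^ #y := by
  have hpi : {ω | y ⊆ faces ω} =
      Set.univ.pi fun t : Tri n ↦ if t.1 ∈ y then ({true} : Set Bool) else Set.univ := by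
    ext ω
    simp only [Set.mem_ofPred_eq, subset_iff, mem_faces, Set.mem_univ_pi, Subtype.forall]
    exact ⟨fun h t ht ↦ by split_ifs with hty; exacts [(h hty).2, trivial],
      fun h t hty ↦ ⟨hy t hty, by simpa [hty] using h t (hy t hty)⟩⟩
  have hcard : #{t : Tri n | t.1 ∈ y} = #y := by
    rw [← card_map (.subtype _)]
    congr 1
    ext t
    simpa using hy t
  rw [lmProb_eq_pi, hpi, Measure.pi_pi, ← hcard, ← prod_const, prod_filter]
  refine prod_congr rfl fun t _ ↦ ?_
  split_ifs
  · simp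
  · exact measure_univ

end Probability

section RandomFillings

variable {n : ℕ}

lemma IsFilling.fills {ω : Tri n → Bool} {τ : Finset (Fin n)} {y : Finset (Finset (Fin n))}
    (h : IsFilling n ω τ y) : Fills τ y where
  card_eq_three t ht := (h.1 t ht).1
  chainBoundary_eq := by
    ext e
    induction e with
    | _ a b =>
      obtain rfl | hab := eq_or_ne a b
      · simp [chainBoundary, mk_mem_faceEdges]
      · simpa [chainBoundary, mk_mem_faceEdges, hab, insert_subset_iff] using
          h.2 {a, b} (card_pair hab)

lemma exists_minimal_fills_of_fill_lt {ω : Tri n → Bool} {τ : Finset (Fin n)} {M : ℝ≥0}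
    (h : (fill n ω τ : ℝ≥0∞) < M) : ∃ y ⊆ faces ω, Minimal (Fills τ) y ∧ #y < M := by
  rw [fill, ENat.toENNReal_iInf, iInf_lt_iff] at h
  obtain ⟨⟨y, hy⟩, hlt⟩ := h
  obtain ⟨y', hsub, hy'⟩ := exists_minimal_le_of_wellFoundedLT (Fills τ) y hy.fills
  have hcard : (#y' : ℝ≥0) ≤ #y := by exact_mod_cast card_le_card hsub
  refine ⟨y', fun t ht ↦ mem_faces.2 (hy.1 t (hsub ht)), hy', hcard.trans_lt ?_⟩
  rwa [ENat.toENNReal_coe, ← ENNReal.coe_natCast, ENNReal.coe_lt_coe] at hlt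

/-- The sum of the squared filling areas of all triangles. -/
noncomputable def sumSqFill (n : ℕ) (ω : Tri n → Bool) : ℝ≥0∞ :=
  ∑ τ ∈ univ.powersetCard 3, (fill n ω τ : ℝ≥0∞) ^ 2

open Classical in
/-- The pairs of a triangle and a minimal filling of it with fewer than `M` faces. -/
noncomputable def smallFillings (n : ℕ) (M : ℝ≥0) :
    Finset (Finset (Fin n) × Finset (Finset (Fin n))) :=
  {g | #g.1 = 3 ∧ Minimal (Fills g.1) g.2 ∧ #g.2 < M}

lemma mem_smallFillings {M : ℝ≥0} {g : Finset (Fin n) × Finset (Finset (Fin n))} :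
    g ∈ smallFillings n M ↔ #g.1 = 3 ∧ Minimal (Fills g.1) g.2 ∧ #g.2 < M := by
  simp [smallFillings]

lemma card_le_two_mul_card_of_sum_sq_lt {ι : Type*} {s : Finset ι} {f : ι → ℝ≥0∞} {N : ℝ≥0∞}
    (h : ∑ i ∈ s, f i ^ 2 < #s * N ^ 2) : #s ≤ 2 * #{i ∈ s | f i < 2 * N} := by
  contrapose! h
  have hlarge : #s ≤ 4 * #{i ∈ s | ¬ f i < 2 * N} := by
    have := card_filter_add_card_filter_not (s := s) (f · < 2 * N)
    omega
  calc #s * N ^ 2 ≤ (4 * #{i ∈ s | ¬ f i < 2 * N} : ℕ) * N ^ 2 := by gcongr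
    _ = #{i ∈ s | ¬ f i < 2 * N} • (2 * N) ^ 2 := by rw [nsmul_eq_mul]; push_cast; ring
    _ ≤ ∑ i ∈ s with ¬ f i < 2 * N, f i ^ 2 := by
        refine card_nsmul_le_sum _ _ _ fun i hi ↦ ?_
        have := not_lt.1 (mem_filter.1 hi).2
        gcongr
    _ ≤ ∑ i ∈ s, f i ^ 2 := sum_le_sum_of_subset (filter_subset _ _)

/-- If the sum of squares is small, then at least half of the triangles have a filling with fewer
than `2N` faces; a first moment bound on the number of small minimal fillings in the complex. -/
lemma choose_div_two_mul_lmProb_le (p : I) (N : ℝ≥0) :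
    (n.choose 3 / 2 : ℝ≥0∞) * lmProb n (toNNReal p) {ω | sumSqFill n ω < n.choose 3 * N ^ 2} ≤
      ∑ g ∈ smallFillings n (2 * N), (toNNReal p : ℝ≥0∞) ^ #g.2 := by
  have hcard : #((univ : Finset (Fin n)).powersetCard 3) = n.choose 3 := by simp
  have hprob (g) (hg : g ∈ smallFillings n (2 * N)) :
      (toNNReal p : ℝ≥0∞) ^ #g.2 = lmProb n (toNNReal p) {ω | g.2 ⊆ faces ω} :=
    (lmProb_subset_faces p (mem_smallFillings.1 hg).2.1.prop.card_eq_three).symm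
  rw [sum_congr rfl hprob]
  simp only [lmProb_eq_pi]
  refine mul_measure_le_sum_of_le_card _ _ (fun _ _ ↦ .of_discrete) fun ω hω ↦ ?_
  rw [Set.mem_ofPred_eq, ← hcard] at hω
  set s := {τ ∈ (univ : Finset (Fin n)).powersetCard 3 | (fill n ω τ : ℝ≥0∞) < 2 * N}
  have hmin (τ) (hτ : τ ∈ s) : ∃ y ⊆ faces ω, Minimal (Fills τ) y ∧ #y < 2 * N :=
    exists_minimal_fills_of_fill_lt (mod_cast (mem_filter.1 hτ).2)
  choose! y hfaces hminimal hlt using hmin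
  classical
  refine ⟨s.image fun τ ↦ (τ, y τ), ?_, ?_, ?_⟩
  · refine image_subset_iff.2 fun τ hτ ↦ mem_smallFillings.2 ⟨?_, hminimal τ hτ, hlt τ hτ⟩
    exact (mem_powersetCard.1 (mem_filter.1 hτ).1).2
  · rw [card_image_of_injective _ fun _ _ h ↦ congrArg Prod.fst h, ← hcard]
    refine ENNReal.div_le_of_le_mul' ?_
    exact_mod_cast card_le_two_mul_card_of_sum_sq_lt hω
  · exact forall_mem_image.2 hfaces

end RandomFillings

section Asymptotics

open Filter
open scoped Topology

lemma add_four_le_four_mul_four_pow (m : ℕ) : m + 4 ≤ 4 * 4 ^ m := by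
  induction m with
  | zero => rfl
  | succ m ih => rw [pow_succ]; omega

lemma count_mul_pow_le {n m : ℕ} (hn : 1 ≤ n) {p : ℝ} (hp : 0 ≤ p)
    (hmp : √(n + (m + 3 : ℕ)) * p ≤ 1 / 1024) :
    n * 4 ^ (m + 2) * (16 * √(n + (m + 3 : ℕ))) ^ (m + 3) * p ^ m ≤
      2 ^ 19 * (n ^ 2 * √n) * (1 / 2) ^ m := by
  set r := √((n : ℝ) + (m + 3 : ℕ))
  have hr : r ≤ √n * (2 * 2 ^ m) := by
    refine Real.sqrt_le_iff.2 ⟨by positivity, ?_⟩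
    calc (n + (m + 3 : ℕ) : ℝ) ≤ n * (m + 4) := by
          have : (1 : ℝ) ≤ n := mod_cast hn
          push_cast
          nlinarith [m.cast_nonneg (α := ℝ)]
      _ ≤ n * (4 * 4 ^ m) := by gcongr; exact_mod_cast add_four_le_four_mul_four_pow m
      _ = (√n * (2 * 2 ^ m)) ^ 2 := by
          rw [mul_pow, Real.sq_sqrt n.cast_nonneg, mul_pow, ← pow_mul, mul_comm m, pow_mul]
          norm_num
  calc n * 4 ^ (m + 2) * (16 * r) ^ (m + 3) * p ^ m
      = n * 4 ^ (m + 2) * 16 ^ (m + 3) * r ^ 3 * (r * p) ^ m := by ring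
    _ ≤ n * 4 ^ (m + 2) * 16 ^ (m + 3) * (√n * (2 * 2 ^ m)) ^ 3 * (1 / 1024) ^ m := by gcongr
    _ = 2 ^ 19 * (n * √n ^ 2 * √n) * (4 * 16 * 2 ^ 3 * (1 / 1024)) ^ m := by
        simp only [mul_pow, ← pow_mul]
        ring
    _ = 2 ^ 19 * (n ^ 2 * √n) * (1 / 2) ^ m := by
        rw [Real.sq_sqrt n.cast_nonneg]
        norm_num [sq]

lemma sum_pow_smallFillings_le {n : ℕ} (hn : 1 ≤ n) {p M : ℝ≥0}
    (hpM : √(n + M + 3) * p ≤ 1 / 1024) :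
    ∑ g ∈ smallFillings n M, (p : ℝ) ^ #g.2 ≤ 2 ^ 20 * (n ^ 2 * √n) := by
  have hfiber (m) (hm : m ∈ range ⌈M⌉₊) :
      ∑ g ∈ smallFillings n M with #g.2 = m, (p : ℝ) ^ #g.2 ≤
        2 ^ 19 * (n ^ 2 * √n) * (1 / 2) ^ m := by
    have hmM : (m : ℝ) ≤ M := (Nat.lt_ceil.1 (mem_range.1 hm)).le
    have hmp : √(n + (m + 3 : ℕ)) * p ≤ 1 / 1024 := by
      refine le_trans ?_ hpM
      gcongr ?_ * _
      refine Real.sqrt_le_sqrt ?_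
      push_cast
      linarith
    refine le_trans ?_ (count_mul_pow_le hn p.coe_nonneg hmp)
    rw [sum_congr rfl fun g hg ↦ by rw [(mem_filter.1 hg).2], sum_const, nsmul_eq_mul]
    gcongr
    refine (card_minimal_fillings_le fun g hg ↦ ?_).trans_eq (by rw [Fintype.card_fin])
    obtain ⟨hg, hcard⟩ := mem_filter.1 hg
    obtain ⟨hthree, hmin, -⟩ := mem_smallFillings.1 hg
    exact ⟨hthree, hmin, hcard⟩
  have hmaps (g) (hg : g ∈ smallFillings n M) : #g.2 ∈ range ⌈M⌉₊ :=
    mem_range.2 (Nat.lt_ceil.2 (mem_smallFillings.1 hg).2.2)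
  calc ∑ g ∈ smallFillings n M, (p : ℝ) ^ #g.2
      ≤ ∑ m ∈ range ⌈M⌉₊, 2 ^ 19 * (n ^ 2 * √n) * (1 / 2) ^ m := by
        rw [← sum_fiberwise_of_maps_to hmaps]
        exact sum_le_sum hfiber
    _ ≤ 2 ^ 19 * (n ^ 2 * √n) * 2 := by
        rw [← mul_sum]
        gcongr
        exact sum_geometric_two_le _
    _ = 2 ^ 20 * (n ^ 2 * √n) := by ring

lemma pow_three_div_le_choose_three {n : ℕ} (hn : 3 ≤ n) :
    (n : ℝ) ^ 3 / 162 ≤ n.choose 3 := by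
  have hn' : (n : ℝ) / 3 ≤ (n + 1 - 3 : ℕ) := by
    rw [div_le_iff₀ (by norm_num)]
    norm_cast
    omega
  calc (n : ℝ) ^ 3 / 162 = ((n : ℝ) / 3) ^ 3 / 6 := by ring
    _ ≤ ((n + 1 - 3 : ℕ) : ℝ) ^ 3 / 6 := by gcongr
    _ = ((n + 1 - 3 : ℕ) : ℝ) ^ 3 / (Nat.factorial 3 : ℕ) := by norm_num [Nat.factorial]
    _ ≤ n.choose 3 := Nat.pow_le_choose 3 n

lemma lmProb_sumSqFill_lt_le {n : ℕ} (hn : 3 ≤ n) {p : I} {N : ℝ≥0}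
    (hpN : √(n + 2 * N + 3) * p ≤ 1 / 1024) :
    lmProb n (toNNReal p) {ω | sumSqFill n ω < n.choose 3 * N ^ 2} ≤
      ENNReal.ofReal (2 ^ 21 * 162 / √n) := by
  set x := lmProb n (toNNReal p) {ω | sumSqFill n ω < n.choose 3 * N ^ 2}
  have hn₀ : (0 : ℝ) < n := by positivity
  have hchoose : ENNReal.ofReal (n ^ 3 / 162 / 2) ≤ (n.choose 3 / 2 : ℝ≥0∞) := by
    rw [ENNReal.ofReal_div_of_pos two_pos, ENNReal.ofReal_ofNat, ← ENNReal.ofReal_natCast]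
    gcongr
    exact pow_three_div_le_choose_three hn
  have hsum : ∑ g ∈ smallFillings n (2 * N), (toNNReal p : ℝ≥0∞) ^ #g.2 ≤
      ENNReal.ofReal (2 ^ 20 * (n ^ 2 * √n)) := by
    refine le_trans ?_ <| ENNReal.ofReal_le_ofReal <|
      sum_pow_smallFillings_le (p := toNNReal p) (by omega) (by exact_mod_cast hpN)
    exact_mod_cast (ENNReal.ofReal_coe_nnreal).ge
  have hconst : ENNReal.ofReal (2 ^ 20 * (n ^ 2 * √n)) =
      ENNReal.ofReal (n ^ 3 / 162 / 2) * ENNReal.ofReal (2 ^ 21 * 162 / √n) := by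
    rw [← ENNReal.ofReal_mul (by positivity)]
    congr 1
    have := Real.sq_sqrt hn₀.le
    field_simp
    linarith
  refine (ENNReal.mul_le_mul_iff_right (a := ENNReal.ofReal (n ^ 3 / 162 / 2)) ?_ ?_).1 ?_
  · simp [pow_pos hn₀]
  · exact ENNReal.ofReal_ne_top
  · calc ENNReal.ofReal (n ^ 3 / 162 / 2) * x ≤ n.choose 3 / 2 * x := by gcongr
      _ ≤ _ := choose_div_two_mul_lmProb_le p N
      _ ≤ _ := hsum.trans_eq hconst

theorem tendsto_lmProb_le_sumSqFill {p N : ℕ → ℝ≥0}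
    (hpN : Tendsto (fun n : ℕ ↦ (n + N n) * p n ^ 2) atTop (𝓝 0)) :
    Tendsto (fun n ↦ lmProb n (p n) {ω | n.choose 3 * (N n : ℝ≥0∞) ^ 2 ≤ sumSqFill n ω})
      atTop (𝓝 1) := by
  have hsmall : ∀ᶠ n : ℕ in atTop, 3 ≤ n ∧ (n + N n) * p n ^ 2 ≤ 1 / 2 ^ 21 :=
    (eventually_ge_atTop 3).and (hpN.eventually_le_const (by positivity))
  have hp : ∀ᶠ n : ℕ in atTop, p n ≤ 1 := by
    filter_upwards [hsmall] with n ⟨hn, hpn⟩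
    have hn' : (1 : ℝ≥0) ≤ n + N n := le_add_right (by exact_mod_cast (by omega : 1 ≤ n))
    refine (pow_le_one_iff two_ne_zero).1 ?_
    calc p n ^ 2 ≤ (n + N n) * p n ^ 2 := le_mul_of_one_le_left zero_le hn'
      _ ≤ 1 := hpn.trans (div_le_one_of_le₀ (one_le_pow₀ one_le_two) zero_le)
  have hbad : Tendsto (fun n ↦ lmProb n (p n) {ω | sumSqFill n ω < n.choose 3 * N n ^ 2})
      atTop (𝓝 0) := by
    have hlim : Tendsto (fun n : ℕ ↦ ENNReal.ofReal (2 ^ 21 * 162 / √n)) atTop (𝓝 0) := by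
      rw [← ENNReal.ofReal_zero]
      exact ENNReal.tendsto_ofReal <| tendsto_const_nhds.div_atTop <|
        Real.tendsto_sqrt_atTop.comp tendsto_natCast_atTop_atTop
    refine tendsto_of_tendsto_of_tendsto_of_le_of_le' tendsto_const_nhds hlim (by simp) ?_
    filter_upwards [hsmall, hp] with n ⟨hn, hpn⟩ hp
    refine lmProb_sumSqFill_lt_le (p := ⟨p n, (p n).2, hp⟩) hn ?_
    refine (pow_le_pow_iff_left₀ (by positivity) (by positivity) two_ne_zero).1 ?_
    rw [mul_pow, Real.sq_sqrt (by positivity)]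
    have hn' : (3 : ℝ) ≤ n := mod_cast hn
    have hpn' : (n + N n : ℝ) * p n ^ 2 ≤ 1 / 2 ^ 21 := mod_cast hpn
    calc (n + 2 * N n + 3 : ℝ) * p n ^ 2 ≤ 2 * (n + N n) * p n ^ 2 := by gcongr; linarith
      _ ≤ (1 / 1024) ^ 2 := by linarith [hpn']
  have hgood := ENNReal.Tendsto.sub (tendsto_const_nhds (x := 1)) hbad (.inl ENNReal.one_ne_top)
  rw [tsub_zero] at hgood
  refine hgood.congr' ?_
  filter_upwards [hp] with n hp
  refine (lmProb_compl ⟨p n, (p n).2, hp⟩ _).symm.trans ?_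
  simp only [Set.compl_ofPred, not_lt]
  rfl

lemma tendsto_natCast_add_rpow_mul_rpow {α ε : ℝ} (hα : α < 1 / 2) (hε : 0 < ε) :
    Tendsto (fun n : ℕ ↦ ((n : ℝ≥0) + (n : ℝ≥0) ^ (2 - 2 * α - ε)) * ((n : ℝ≥0) ^ (α - 1)) ^ 2)
      atTop (𝓝 0) := by
  have hzero (y : ℝ) (hy : 0 < y) : Tendsto (fun n : ℕ ↦ (n : ℝ≥0) ^ (-y)) atTop (𝓝 0) := by
    rw [← NNReal.tendsto_coe]
    push_cast
    exact (tendsto_rpow_neg_atTop hy).comp tendsto_natCast_atTop_atTop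
  have hsum := (hzero (1 - 2 * α) (by linarith)).add (hzero ε hε)
  rw [add_zero] at hsum
  refine hsum.congr' ?_
  filter_upwards [eventually_ne_atTop 0] with n hn
  have hn₀ : (n : ℝ≥0) ≠ 0 := mod_cast hn
  rw [← NNReal.rpow_mul_natCast, add_mul, ← NNReal.rpow_add hn₀,
    ← NNReal.rpow_one_add' (by push_cast; linarith)]
  congr 2 <;> push_cast <;> ring

theorem sum_sq_fill_whp_general (α ε : ℝ) (hα : α < 1 / 2) (hε : 0 < ε) :
    Tendsto (fun n : ℕ ↦ lmProb n ((n : ℝ≥0∞) ^ (α - 1))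
        {ω | (n.choose 3 : ℝ≥0∞) * ((n : ℝ≥0∞) ^ (2 - 2 * α - ε)) ^ 2 ≤ sumSqFill n ω})
      atTop (𝓝 1) := by
  refine (tendsto_lmProb_le_sumSqFill (tendsto_natCast_add_rpow_mul_rpow hα hε)).congr' ?_
  filter_upwards [eventually_ne_atTop 0] with n hn
  have hcoe (x : ℝ) : (((n : ℝ≥0) ^ x : ℝ≥0) : ℝ≥0∞) = (n : ℝ≥0∞) ^ x := by
    rw [ENNReal.coe_rpow_of_ne_zero (mod_cast hn), ENNReal.coe_natCast]
  simp only [hcoe]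

end Asymptotics

/-- **Proposition (sum of squared filling areas).**
Let `0 < α < 1/2`, `ε > 0`, and `p = n^(α-1)`. With high probability,
`Σ_τ (Fill_Y(τ))² ≥ C(n,3)·(n^(2-2α-ε))²`, the sum over all 3-element subsets `τ`
of the vertex set, taken in the extended nonnegative reals. -/
theorem sum_sq_fill_whp (α ε : ℝ) (hα0 : 0 < α) (hα : α < 1 / 2) (hε : 0 < ε) :
    Filter.Tendsto (fun n : ℕ =>
      lmProb n ((n : ℝ≥0∞) ^ (α - 1))
        {ω | (n.choose 3 : ℝ≥0∞) * ((n : ℝ≥0∞) ^ (2 - 2 * α - ε)) ^ 2 ≤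
          ∑ τ ∈ (Finset.univ : Finset (Fin n)).powersetCard 3,
            ((fill n ω τ : ℕ∞) : ℝ≥0∞) ^ 2})
      Filter.atTop (nhds 1) :=
  sum_sq_fill_whp_general α ε hα hε
end
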